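/- arXiv:1104.2530 — 2 statements merged into one kernel-verified Lean document; each statement's English description precedes it below -/
import Mathlib

section
/- The canonical decomposition of a pair of symmetric complex matrices is unique up to permutation of summands: if X_1 ⊕ ⋯ ⊕ X_t and Y_1 ⊕ ⋯ ⊕ Y_s are congruent pairs of symmetric complex matrices, where every X_i and every Y_j is a canonical pair of one of the forms H_k(λ) (λ ∈ ℂ), K_k, or L_k, then s = t and there is a permutation σ of {1,…,t} with Y_{σ(i)} = X_i for all i. -/
open Matrix

noncomputable section

/-- `Λ_n(λ)`: the `n × n` matrix with `(i,j)` entry `λ` if `i + j = n + 1`, `1` if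
`i + j = n + 2`, and `0` otherwise (1-based indices). -/
def lamM (n : ℕ) (lam : ℂ) : Matrix (Fin n) (Fin n) ℂ :=
  Matrix.of fun i j =>
    if (i : ℕ) + 1 + ((j : ℕ) + 1) = n + 1 then lam
    else if (i : ℕ) + 1 + ((j : ℕ) + 1) = n + 2 then 1 else 0

/-- `Δ_n`: the `n × n` matrix with `(i,j)` entry `1` if `i + j = n + 1` and `0`
otherwise (1-based indices). -/
def delM (n : ℕ) : Matrix (Fin n) (Fin n) ℂ :=
  Matrix.of fun i j => if (i : ℕ) + 1 + ((j : ℕ) + 1) = n + 1 then 1 else 0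

/-- `F_n`: the `n × (n+1)` matrix with `F_n(i,j) = 1` exactly when `j = i`. -/
def FM (n : ℕ) : Matrix (Fin n) (Fin (n + 1)) ℂ :=
  Matrix.of fun i j => if (j : ℕ) = (i : ℕ) then 1 else 0

/-- `G_n`: the `n × (n+1)` matrix with `G_n(i,j) = 1` exactly when `j = i + 1`. -/
def GM (n : ℕ) : Matrix (Fin n) (Fin (n + 1)) ℂ :=
  Matrix.of fun i j => if (j : ℕ) = (i : ℕ) + 1 then 1 else 0

/-- `L_n^{(1)} = [[0, F_nᵀ], [F_n, 0]]`, a symmetric `(2n+1) × (2n+1)` matrix. -/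
def L1M (n : ℕ) : Matrix (Fin (2 * n + 1)) (Fin (2 * n + 1)) ℂ :=
  Matrix.reindex (finSumFinEquiv.trans (finCongr (by omega)))
    (finSumFinEquiv.trans (finCongr (by omega)))
    (Matrix.fromBlocks 0 (FM n)ᵀ (FM n) 0)

/-- `L_n^{(2)} = [[0, G_nᵀ], [G_n, 0]]`, a symmetric `(2n+1) × (2n+1)` matrix. -/
def L2M (n : ℕ) : Matrix (Fin (2 * n + 1)) (Fin (2 * n + 1)) ℂ :=
  Matrix.reindex (finSumFinEquiv.trans (finCongr (by omega)))
    (finSumFinEquiv.trans (finCongr (by omega)))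
    (Matrix.fromBlocks 0 (GM n)ᵀ (GM n) 0)

theorem lamM_isSymm (n : ℕ) (lam : ℂ) : (lamM n lam).IsSymm := by
  unfold Matrix.IsSymm lamM
  ext i j
  simp only [Matrix.transpose_apply, Matrix.of_apply]
  split_ifs <;> first | rfl | omega

theorem delM_isSymm (n : ℕ) : (delM n).IsSymm := by
  unfold Matrix.IsSymm delM
  ext i j
  simp only [Matrix.transpose_apply, Matrix.of_apply]
  split_ifs <;> first | rfl | omega

theorem L1M_isSymm (n : ℕ) : (L1M n).IsSymm := by
  unfold Matrix.IsSymm L1M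
  rw [Matrix.transpose_reindex, Matrix.fromBlocks_transpose]
  simp

theorem L2M_isSymm (n : ℕ) : (L2M n).IsSymm := by
  unfold Matrix.IsSymm L2M
  rw [Matrix.transpose_reindex, Matrix.fromBlocks_transpose]
  simp

/-- The type of canonical summands: `H_k(λ)`, `K_k`, `L_k`. -/
inductive CanType where
  | H : ℕ → ℂ → CanType
  | K : ℕ → CanType
  | L : ℕ → CanType

/-- The size of a canonical pair. -/
def CanType.size : CanType → ℕ
  | .H k _ => k
  | .K k => k
  | .L k => 2 * k + 1

/-- The size parameter of a canonical pair. -/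
def CanType.param : CanType → ℕ
  | .H k _ => k
  | .K k => k
  | .L k => k

/-- The first matrix of a canonical pair. -/
def CanType.A : (c : CanType) → Matrix (Fin c.size) (Fin c.size) ℂ
  | .H k _ => delM k
  | .K k => lamM k 0
  | .L k => L1M k

/-- The second matrix of a canonical pair. -/
def CanType.B : (c : CanType) → Matrix (Fin c.size) (Fin c.size) ℂ
  | .H k lam => lamM k lam
  | .K k => delM k
  | .L k => L2M k

/-- Congruence of pairs of square complex matrices (over possibly different index
types): `(A', B') = (Sᵀ A S, Sᵀ B S)` for some invertible `S`. -/
def CongruentPairs {ι κ : Type} [Fintype ι] [Fintype κ] [DecidableEq ι] [DecidableEq κ]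
    (p : Matrix ι ι ℂ × Matrix ι ι ℂ) (q : Matrix κ κ ℂ × Matrix κ κ ℂ) : Prop :=
  ∃ S : Matrix ι κ ℂ, (∃ T : Matrix κ ι ℂ, S * T = 1 ∧ T * S = 1) ∧
    q.1 = Sᵀ * p.1 * S ∧ q.2 = Sᵀ * p.2 * S

end

/-!
A strict equivalence of two pairs `(A, B)` carries `ker P ∩ (Q⁻¹ P)ᵐ U` to the corresponding
subspace for any members `P`, `Q` of the pencil `a A + b B` and for `U = 0` and `U` the whole
space, and these subspaces split along direct sums. On a canonical summand their dimensions are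
elementary. For `U = 0`, `P = B`, `Q = A`, passing from `m` to `m + 1` raises the dimension by one
exactly on `L_m`. For `U` the whole space, passing from `m` to `m + 1` lowers it by one exactly on
`H_{m+1}(μ)` when `P = B - μ A`, `Q = A`, and exactly on `K_{m+1}` when `P = A`, `Q = B`; on every
`L_k` it is then constant, since the nonzero members of the pencil `a F_k + b G_k` are surjective.
So the multiplicity of each canonical pair is determined by the equivalence class.
-/

section WongSequence

variable {R V V' W W' : Type*} [Ring R] [AddCommGroup V] [Module R V]
  [AddCommGroup V'] [Module R V'] [AddCommGroup W] [Module R W] [AddCommGroup W'] [Module R W']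

/-- The step `U ↦ Q⁻¹(P U)` of the Wong sequences of the pencil spanned by `P` and `Q`. -/
def wongStep (P Q : V →ₗ[R] W) (U : Submodule R V) : Submodule R V :=
  (U.map P).comap Q

/-- The dimension of `ker P ∩ (Q⁻¹ P)ᵐ U`. For `U = ⊤` it counts the Jordan blocks of size greater
than `m` at the member `P` of the pencil, together with the singular blocks; for `U = ⊥` it counts
the singular blocks with minimal index less than `m`. -/
noncomputable def wongDim (P Q : V →ₗ[R] W) (U : Submodule R V) (m : ℕ) : ℕ :=
  Module.finrank R ↥(LinearMap.ker P ⊓ (wongStep P Q)^[m] U)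

theorem mem_wongStep {P Q : V →ₗ[R] W} {U : Submodule R V} {x : V} :
    x ∈ wongStep P Q U ↔ ∃ w ∈ U, P w = Q x :=
  Iff.rfl

theorem wongStep_comp (f : W ≃ₗ[R] W') (e : V' ≃ₗ[R] V) (P Q : V →ₗ[R] W)
    (U : Submodule R V) :
    wongStep (f.toLinearMap ∘ₗ P ∘ₗ e.toLinearMap) (f.toLinearMap ∘ₗ Q ∘ₗ e.toLinearMap)
        (U.comap e.toLinearMap) =
      (wongStep P Q U).comap e.toLinearMap := by
  simp only [wongStep, Submodule.map_comp, Submodule.comap_comp,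
    Submodule.map_comap_eq_of_surjective e.surjective,
    Submodule.comap_map_eq_of_injective f.injective]

theorem wongDim_comp (f : W ≃ₗ[R] W') (e : V' ≃ₗ[R] V) (P Q : V →ₗ[R] W) (U : Submodule R V)
    (m : ℕ) :
    wongDim (f.toLinearMap ∘ₗ P ∘ₗ e.toLinearMap) (f.toLinearMap ∘ₗ Q ∘ₗ e.toLinearMap)
      (U.comap e.toLinearMap) m = wongDim P Q U m := by
  have hstep : Function.Semiconj (Submodule.comap e.toLinearMap) (wongStep P Q)
      (wongStep (f.toLinearMap ∘ₗ P ∘ₗ e.toLinearMap) (f.toLinearMap ∘ₗ Q ∘ₗ e.toLinearMap)) :=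
    fun U => (wongStep_comp f e P Q U).symm
  have hker : LinearMap.ker (f.toLinearMap ∘ₗ P ∘ₗ e.toLinearMap) =
      (LinearMap.ker P).comap e.toLinearMap := by
    rw [LinearEquiv.ker_comp, LinearMap.ker_comp]
  rw [wongDim, wongDim, ← (hstep.iterate_right m).eq, hker, ← Submodule.comap_inf,
    Submodule.comap_equiv_eq_map_symm, LinearEquiv.finrank_map_eq]

theorem wongDim_bot_comp (f : W ≃ₗ[R] W') (e : V' ≃ₗ[R] V) (P Q : V →ₗ[R] W) (m : ℕ) :
    wongDim (f.toLinearMap ∘ₗ P ∘ₗ e.toLinearMap) (f.toLinearMap ∘ₗ Q ∘ₗ e.toLinearMap) ⊥ m =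
      wongDim P Q ⊥ m := by
  rw [← wongDim_comp f e, Submodule.comap_bot, LinearEquiv.ker]

theorem wongDim_top_comp (f : W ≃ₗ[R] W') (e : V' ≃ₗ[R] V) (P Q : V →ₗ[R] W) (m : ℕ) :
    wongDim (f.toLinearMap ∘ₗ P ∘ₗ e.toLinearMap) (f.toLinearMap ∘ₗ Q ∘ₗ e.toLinearMap) ⊤ m =
      wongDim P Q ⊤ m := by
  rw [← wongDim_comp f e, Submodule.comap_top]

theorem wongDim_eq_zero_of_injective_left [Nontrivial R] {P : V →ₗ[R] W}
    (hP : Function.Injective P) (Q : V →ₗ[R] W) (U : Submodule R V) (m : ℕ) :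
    wongDim P Q U m = 0 := by
  rw [wongDim, LinearMap.ker_eq_bot.2 hP, bot_inf_eq, finrank_bot]

theorem wongDim_bot_eq_zero_of_injective_right [Nontrivial R] (P : V →ₗ[R] W) {Q : V →ₗ[R] W}
    (hQ : Function.Injective Q) (m : ℕ) : wongDim P Q ⊥ m = 0 := by
  have hfix : wongStep P Q ⊥ = ⊥ := by
    rw [wongStep, Submodule.map_bot, Submodule.comap_bot, LinearMap.ker_eq_bot.2 hQ]
  rw [wongDim, Function.iterate_fixed hfix, inf_bot_eq, finrank_bot]

theorem wongDim_top_of_surjective {P : V →ₗ[R] W} (hP : Function.Surjective P) (Q : V →ₗ[R] W)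
    (m : ℕ) : wongDim P Q ⊤ m = Module.finrank R (LinearMap.ker P) := by
  have hfix : wongStep P Q ⊤ = ⊤ := by
    rw [wongStep, Submodule.map_top, LinearMap.range_eq_top.2 hP, Submodule.comap_top]
  rw [wongDim, Function.iterate_fixed hfix, inf_top_eq]

theorem wongStep_prodMap (P Q : V →ₗ[R] W) (P' Q' : V' →ₗ[R] W') (U : Submodule R V)
    (U' : Submodule R V') :
    wongStep (P.prodMap P') (Q.prodMap Q') (U.prod U') =
      (wongStep P Q U).prod (wongStep P' Q' U') := by
  ext ⟨x, x'⟩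
  simp only [mem_wongStep, Prod.exists, Submodule.mem_prod, LinearMap.prodMap_apply, Prod.mk_inj]
  constructor
  · rintro ⟨w, w', ⟨hw, hw'⟩, hwx, hwx'⟩
    exact ⟨⟨w, hw, hwx⟩, w', hw', hwx'⟩
  · rintro ⟨⟨w, hw, hwx⟩, w', hw', hwx'⟩
    exact ⟨w, w', ⟨hw, hw'⟩, hwx, hwx'⟩

theorem wongDim_prodMap_of_injective (P Q : V →ₗ[R] W) {P' : V' →ₗ[R] W'}
    (hP' : Function.Injective P') (Q' : V' →ₗ[R] W') (U : Submodule R V) (U' : Submodule R V')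
    (m : ℕ) : wongDim (P.prodMap P') (Q.prodMap Q') (U.prod U') m = wongDim P Q U m := by
  have hiter : (wongStep (P.prodMap P') (Q.prodMap Q'))^[m] (U.prod U') =
      ((wongStep P Q)^[m] U).prod ((wongStep P' Q')^[m] U') := by
    induction m with
    | zero => rfl
    | succ m ih => simp only [Function.iterate_succ_apply', ih, wongStep_prodMap]
  rw [wongDim, hiter, LinearMap.ker_prodMap, LinearMap.ker_eq_bot.2 hP', Submodule.prod_inf_prod,
    bot_inf_eq, ← Submodule.map_inl,
    ← (Submodule.equivMapOfInjective _ LinearMap.inl_injective _).finrank_eq, wongDim]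

end WongSequence

section DirectSum

variable {K ι : Type*} [DivisionRing K] {V W : ι → Type*}
  [∀ i, AddCommGroup (V i)] [∀ i, Module K (V i)]
  [∀ i, AddCommGroup (W i)] [∀ i, Module K (W i)]

theorem finrank_pi_univ [Fintype ι] [∀ i, FiniteDimensional K (V i)] (U : ∀ i, Submodule K (V i)) :
    Module.finrank K (Submodule.pi Set.univ U) = ∑ i, Module.finrank K (U i) := by
  let e : Submodule.pi Set.univ U ≃ₗ[K] ∀ i, U i :=
    { toFun := fun x i => ⟨x.1 i, x.2 i trivial⟩
      invFun := fun x => ⟨fun i => (x i).1, fun i _ => (x i).2⟩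
      map_add' := fun _ _ => rfl
      map_smul' := fun _ _ => rfl }
  rw [e.finrank_eq, Module.finrank_pi_fintype]

theorem wongStep_piMap (P Q : ∀ i, V i →ₗ[K] W i) (U : ∀ i, Submodule K (V i)) :
    wongStep (LinearMap.piMap P) (LinearMap.piMap Q) (Submodule.pi Set.univ U) =
      Submodule.pi Set.univ fun i => wongStep (P i) (Q i) (U i) := by
  ext x
  simp only [mem_wongStep, Submodule.mem_pi, Set.mem_univ, true_imp_iff, LinearMap.coe_piMap,
    funext_iff, Pi.map_apply, ← forall_and]
  exact (Classical.skolem (p := fun i w => w ∈ U i ∧ P i w = Q i (x i))).symm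

theorem wongDim_piMap [Fintype ι] [∀ i, FiniteDimensional K (V i)]
    (P Q : ∀ i, V i →ₗ[K] W i) (U : ∀ i, Submodule K (V i)) (m : ℕ) :
    wongDim (LinearMap.piMap P) (LinearMap.piMap Q) (Submodule.pi Set.univ U) m =
      ∑ i, wongDim (P i) (Q i) (U i) m := by
  have hiter : (wongStep (LinearMap.piMap P) (LinearMap.piMap Q))^[m] (Submodule.pi Set.univ U) =
      Submodule.pi Set.univ fun i => (wongStep (P i) (Q i))^[m] (U i) := by
    induction m with
    | zero => rfl
    | succ m ih => simp only [Function.iterate_succ_apply', ih, wongStep_piMap]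
  have hinf : LinearMap.ker (LinearMap.piMap P) ⊓
      (wongStep (LinearMap.piMap P) (LinearMap.piMap Q))^[m] (Submodule.pi Set.univ U) =
      Submodule.pi Set.univ fun i => LinearMap.ker (P i) ⊓ (wongStep (P i) (Q i))^[m] (U i) := by
    rw [hiter]
    ext x
    simp only [Submodule.mem_inf, Submodule.mem_pi, Set.mem_univ, true_imp_iff,
      LinearMap.mem_ker, LinearMap.coe_piMap, funext_iff, Pi.map_apply, Pi.zero_apply, forall_and]
  rw [wongDim, hinf, finrank_pi_univ]
  rfl

end DirectSum

section CoordinateSubspace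

variable (K : Type*) {ι : Type*} [DivisionRing K]

/-- The subspace of the vectors of `ι → K` supported in `s`. -/
def coordSubspace (s : Set ι) : Submodule K (ι → K) :=
  Submodule.pi sᶜ fun _ => ⊥

variable {K}

theorem mem_coordSubspace {s : Set ι} {x : ι → K} :
    x ∈ coordSubspace K s ↔ ∀ i ∉ s, x i = 0 :=
  Iff.rfl

theorem coordSubspace_univ : coordSubspace K (Set.univ : Set ι) = ⊤ := by
  rw [coordSubspace, Set.compl_univ, Submodule.pi_empty]

theorem coordSubspace_empty : coordSubspace K (∅ : Set ι) = ⊥ := by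
  rw [coordSubspace, Set.compl_empty, Submodule.pi_univ_bot]

theorem coordSubspace_inf (s t : Set ι) :
    coordSubspace K s ⊓ coordSubspace K t = coordSubspace K (s ∩ t) := by
  ext x
  simp only [Submodule.mem_inf, mem_coordSubspace, Set.mem_inter_iff, not_and_or, or_imp,
    forall_and]

theorem finrank_coordSubspace [Finite ι] (s : Set ι) :
    Module.finrank K (coordSubspace K s) = s.ncard := by
  classical
  cases nonempty_fintype ι
  have hpi : coordSubspace K s = Submodule.pi Set.univ fun i => if i ∈ s then ⊤ else ⊥ := by
    ext x
    simp only [mem_coordSubspace, Submodule.mem_pi, Set.mem_univ, true_imp_iff]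
    refine forall_congr' fun i => ?_
    by_cases hi : i ∈ s <;> simp [hi]
  rw [hpi, finrank_pi_univ, Set.ncard_eq_toFinset_card', ← Set.filter_mem_univ_eq_toFinset,
    Finset.card_filter]
  refine Finset.sum_congr rfl fun i _ => ?_
  by_cases hi : i ∈ s
  · rw [if_pos hi, if_pos hi, finrank_top, Module.finrank_self]
  · rw [if_neg hi, if_neg hi, finrank_bot]

end CoordinateSubspace

section MatrixPencil

variable {K : Type*} [Field K]

/-- Strict equivalence of matrix pairs: `q = (R A S, R B S)` with `R` and `S` invertible, where
`p = (A, B)`. -/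
def StrictlyEquivalentPairs {ι κ ι' κ' : Type*} [Fintype ι] [Fintype κ] [Fintype ι'] [Fintype κ']
    [DecidableEq ι] [DecidableEq κ] [DecidableEq ι'] [DecidableEq κ']
    (p : Matrix κ ι K × Matrix κ ι K) (q : Matrix κ' ι' K × Matrix κ' ι' K) : Prop :=
  ∃ (R : Matrix κ' κ K) (S : Matrix ι ι' K),
    (∃ R' : Matrix κ κ' K, R * R' = 1 ∧ R' * R = 1) ∧
      (∃ S' : Matrix ι' ι K, S * S' = 1 ∧ S' * S = 1) ∧
      q.1 = R * p.1 * S ∧ q.2 = R * p.2 * S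

theorem CongruentPairs.strictlyEquivalentPairs {ι κ : Type} [Fintype ι] [Fintype κ]
    [DecidableEq ι] [DecidableEq κ] {p : Matrix ι ι ℂ × Matrix ι ι ℂ}
    {q : Matrix κ κ ℂ × Matrix κ κ ℂ} (h : CongruentPairs p q) : StrictlyEquivalentPairs p q := by
  obtain ⟨S, ⟨T, hST, hTS⟩, hq⟩ := h
  refine ⟨Sᵀ, S, ⟨Tᵀ, ?_, ?_⟩, ⟨T, hST, hTS⟩, hq⟩
  · rw [← transpose_mul, hTS, transpose_one]
  · rw [← transpose_mul, hST, transpose_one]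

theorem StrictlyEquivalentPairs.exists_linearEquiv {ι κ ι' κ' : Type*} [Fintype ι] [Fintype κ]
    [Fintype ι'] [Fintype κ'] [DecidableEq ι] [DecidableEq κ] [DecidableEq ι'] [DecidableEq κ']
    {p : Matrix κ ι K × Matrix κ ι K} {q : Matrix κ' ι' K × Matrix κ' ι' K}
    (h : StrictlyEquivalentPairs p q) :
    ∃ (f : (κ → K) ≃ₗ[K] (κ' → K)) (e : (ι' → K) ≃ₗ[K] (ι → K)), ∀ a b : K,
      (a • q.1 + b • q.2).mulVecLin = f ∘ₗ (a • p.1 + b • p.2).mulVecLin ∘ₗ e := by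
  obtain ⟨R, S, ⟨R', hRR', hR'R⟩, ⟨S', hSS', hS'S⟩, h₁, h₂⟩ := h
  refine ⟨toLin'OfInv hR'R hRR', toLin'OfInv hS'S hSS', fun a b => ?_⟩
  have hmul : a • q.1 + b • q.2 = R * ((a • p.1 + b • p.2) * S) := by
    rw [h₁, h₂]
    simp only [Matrix.add_mul, Matrix.mul_add, Matrix.smul_mul, Matrix.mul_smul, Matrix.mul_assoc]
  rw [hmul, mulVecLin_mul, mulVecLin_mul]
  rfl

theorem mulVecLin_blockDiagonal' {o : Type*} [Fintype o] [DecidableEq o] {m n : o → Type*}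
    [∀ i, Fintype (n i)] (M : ∀ i, Matrix (m i) (n i) K) :
    (blockDiagonal' M).mulVecLin =
      (LinearEquiv.piCurry K fun i (_ : m i) => K).symm ∘ₗ
        LinearMap.piMap (fun i => (M i).mulVecLin) ∘ₗ
          (LinearEquiv.piCurry K fun i (_ : n i) => K) := by
  ext v ⟨i, a⟩
  simp only [mulVecLin_apply, mulVec, dotProduct, Fintype.sum_sigma, blockDiagonal'_apply,
    dite_mul, zero_mul, Finset.sum_dite_irrel, Finset.sum_const_zero, Finset.sum_dite_eq,
    Finset.mem_univ, if_true]
  rfl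

theorem injective_mulVecLin_transpose_of_surjective {m n : Type*} [Fintype m] [Fintype n]
    {M : Matrix m n K} (hM : Function.Surjective M.mulVecLin) :
    Function.Injective Mᵀ.mulVecLin := by
  intro v w hvw
  simp only [mulVecLin_apply, mulVec_transpose] at hvw
  refine dotProduct_eq v w fun y => ?_
  obtain ⟨x, rfl⟩ := hM y
  rw [mulVecLin_apply, dotProduct_mulVec, hvw, dotProduct_mulVec]

end MatrixPencil

section JordanBlock

theorem delM_mulVec_rev (k : ℕ) (v : Fin k → ℂ) (j : Fin k) : (delM k *ᵥ v) j.rev = v j := by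
  have hentry (i : Fin k) : delM k j.rev i = if i = j then 1 else 0 := by
    simp only [delM, of_apply, Fin.val_rev, Fin.ext_iff]
    congr 1
    exact propext (by omega)
  simp [mulVec, dotProduct, hentry]

theorem lamM_zero_mulVec_rev (k : ℕ) (v : Fin k → ℂ) (j : Fin k) :
    (lamM k 0 *ᵥ v) j.rev = if h : (j : ℕ) + 1 < k then v ⟨j + 1, h⟩ else 0 := by
  have hentry (i : Fin k) : lamM k 0 j.rev i = if (i : ℕ) = j + 1 then 1 else 0 := by
    simp only [lamM, of_apply, Fin.val_rev]
    split_ifs <;> first | rfl | omega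
  simp only [mulVec, dotProduct, hentry, ite_mul, one_mul, zero_mul]
  split_ifs with h
  · rw [← Fintype.sum_ite_eq' (⟨j + 1, h⟩ : Fin k) v]
    simp only [Fin.ext_iff]
  · exact Finset.sum_eq_zero fun i _ => if_neg (by omega)

theorem lamM_eq_smul_delM_add (k : ℕ) (μ : ℂ) : lamM k μ = μ • delM k + lamM k 0 := by
  ext i j
  simp only [lamM, delM, Matrix.add_apply, Matrix.smul_apply, of_apply]
  split_ifs <;> simp

theorem injective_mulVecLin_smul_delM_add_smul_lamM (k : ℕ) {c : ℂ} (hc : c ≠ 0) (d : ℂ) :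
    Function.Injective (c • delM k + d • lamM k 0).mulVecLin := by
  set M := (c • delM k + d • lamM k 0).submatrix Fin.rev id with hM
  have htri : M.BlockTriangular id := fun i j (hij : j < i) => by
    simp only [hM, lamM, delM, submatrix_apply, Matrix.add_apply, Matrix.smul_apply, of_apply,
      Fin.val_rev]
    rw [if_neg (by grind), if_neg (by grind), if_neg (by grind)]
    simp
  have hdiag (i : Fin k) : M i i = c := by
    simp only [hM, lamM, delM, submatrix_apply, Matrix.add_apply, Matrix.smul_apply, of_apply,
      Fin.val_rev]
    rw [if_pos (by grind), if_pos (by grind)]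
    simp
  have hdet : M.det ≠ 0 := by
    simp [det_of_isUpperTriangular htri, hdiag, hc]
  intro v w hvw
  have hMvw : M *ᵥ v = M *ᵥ w := funext fun i => congrFun hvw i.rev
  exact mulVec_injective_of_isUnit ((isUnit_iff_isUnit_det M).2 hdet.isUnit) hMvw

theorem lamM_zero_mulVec_eq_delM_mulVec_iff {k : ℕ} {v w : Fin k → ℂ} :
    lamM k 0 *ᵥ v = delM k *ᵥ w ↔
      ∀ j : Fin k, (if h : (j : ℕ) + 1 < k then v ⟨j + 1, h⟩ else 0) = w j := by
  simp only [← lamM_zero_mulVec_rev, ← delM_mulVec_rev k w]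
  exact funext_iff.trans Fin.rev_surjective.forall

theorem ker_lamM_zero (k : ℕ) :
    LinearMap.ker (lamM k 0).mulVecLin = coordSubspace ℂ {j : Fin k | (j : ℕ) = 0} := by
  ext v
  rw [LinearMap.mem_ker, mulVecLin_apply, ← mulVec_zero (delM k),
    lamM_zero_mulVec_eq_delM_mulVec_iff]
  refine ⟨fun hv => ?_, fun hv j => ?_⟩
  · rintro ⟨_ | j, hj⟩ h0
    · exact absurd rfl h0
    · simpa [hj] using hv ⟨j, by omega⟩
  · split_ifs with h
    · exact hv _ (Nat.succ_ne_zero _)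
    · rfl

theorem wongStep_lamM_zero_delM (k m : ℕ) :
    wongStep (lamM k 0).mulVecLin (delM k).mulVecLin
        (coordSubspace ℂ {j : Fin k | (j : ℕ) + m < k}) =
      coordSubspace ℂ {j : Fin k | (j : ℕ) + (m + 1) < k} := by
  ext x
  simp only [mem_wongStep, mulVecLin_apply, lamM_zero_mulVec_eq_delM_mulVec_iff]
  constructor
  · rintro ⟨w, hw, hwx⟩ j hj
    rw [← hwx j]
    split_ifs with h
    · exact hw _ fun (hlt : (j : ℕ) + 1 + m < k) => hj (by grind)
    · rfl
  · intro hx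
    refine ⟨fun i => if 0 < (i : ℕ) then x ⟨i - 1, by omega⟩ else 0, fun i hi => ?_, fun j => ?_⟩
    · by_cases h : 0 < (i : ℕ)
      · exact (if_pos h).trans (hx _ fun hlt => hi (by grind))
      · exact if_neg h
    · split_ifs with h
      · simp
      · exact (hx j fun hlt => h (by grind)).symm

theorem wongDim_lamM_zero_delM (k m : ℕ) :
    wongDim (lamM k 0).mulVecLin (delM k).mulVecLin ⊤ m = if m < k then 1 else 0 := by
  have hiter : (wongStep (lamM k 0).mulVecLin (delM k).mulVecLin)^[m] ⊤ =
      coordSubspace ℂ {j : Fin k | (j : ℕ) + m < k} := by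
    induction m with
    | zero => simp [← coordSubspace_univ]
    | succ m ih => rw [Function.iterate_succ_apply', ih, wongStep_lamM_zero_delM]
  rw [wongDim, hiter, ker_lamM_zero, coordSubspace_inf, finrank_coordSubspace]
  split_ifs with h
  · rw [Set.ncard_eq_one]
    exact ⟨⟨0, by omega⟩, by ext; grind⟩
  · rw [Set.ncard_eq_zero]
    grind

end JordanBlock

section SingularBlock

theorem FM_mulVec (k : ℕ) (v : Fin (k + 1) → ℂ) (i : Fin k) : (FM k *ᵥ v) i = v i.castSucc := by
  have hentry (j : Fin (k + 1)) : FM k i j = if j = i.castSucc then 1 else 0 := by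
    simp [FM, Fin.ext_iff]
  simp [mulVec, dotProduct, hentry]

theorem GM_mulVec (k : ℕ) (v : Fin (k + 1) → ℂ) (i : Fin k) : (GM k *ᵥ v) i = v i.succ := by
  have hentry (j : Fin (k + 1)) : GM k i j = if j = i.succ then 1 else 0 := by
    simp [GM, Fin.ext_iff]
  simp [mulVec, dotProduct, hentry]

theorem surjective_mulVecLin_FM (k : ℕ) : Function.Surjective (FM k).mulVecLin := by
  refine fun y => ⟨Fin.snoc y 0, funext fun i => ?_⟩
  rw [mulVecLin_apply, FM_mulVec, Fin.snoc_castSucc]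

theorem surjective_mulVecLin_smul_FM_add_GM (k : ℕ) (a : ℂ) :
    Function.Surjective (a • FM k + GM k).mulVecLin := by
  intro y
  let v : Fin (k + 1) → ℂ := Fin.induction 0 fun i vi => y i - a * vi
  refine ⟨v, funext fun i => ?_⟩
  have hv : v i.succ = y i - a * v i.castSucc := rfl
  rw [mulVecLin_apply, add_mulVec, smul_mulVec, Pi.add_apply, Pi.smul_apply, FM_mulVec, GM_mulVec,
    hv, smul_eq_mul, add_sub_cancel]

theorem surjective_mulVecLin_GM (k : ℕ) : Function.Surjective (GM k).mulVecLin := by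
  simpa only [zero_smul, zero_add] using surjective_mulVecLin_smul_FM_add_GM k 0

theorem ker_GM (k : ℕ) : LinearMap.ker (GM k).mulVecLin = coordSubspace ℂ {0} := by
  ext v
  simp only [LinearMap.mem_ker, mulVecLin_apply, funext_iff, GM_mulVec, Pi.zero_apply,
    mem_coordSubspace, Set.mem_singleton_iff]
  exact ⟨fun hv j hj => Fin.succ_pred j hj ▸ hv _, fun hv i => hv _ i.succ_ne_zero⟩

theorem wongStep_GM_FM (k m : ℕ) :
    wongStep (GM k).mulVecLin (FM k).mulVecLin
        (coordSubspace ℂ {j : Fin (k + 1) | k < (j : ℕ) + m}) =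
      coordSubspace ℂ {j : Fin (k + 1) | k < (j : ℕ) + (m + 1)} := by
  ext x
  simp only [mem_wongStep, mulVecLin_apply, funext_iff, GM_mulVec, FM_mulVec, mem_coordSubspace,
    Set.mem_ofPred_eq, not_lt]
  constructor
  · rintro ⟨w, hw, hwx⟩ j hj
    obtain ⟨i, rfl⟩ := Fin.exists_castSucc_eq.2 (show j ≠ Fin.last k by grind)
    rw [← hwx i]
    exact hw _ (by grind)
  · intro hx
    refine ⟨Fin.cons 0 fun i => x i.castSucc, fun j hj => ?_, fun i => rfl⟩
    cases j using Fin.cases with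
    | zero => rfl
    | succ i => exact hx _ (by grind)

theorem wongDim_GM_FM (k m : ℕ) :
    wongDim (GM k).mulVecLin (FM k).mulVecLin ⊥ m = if k < m then 1 else 0 := by
  have hiter : (wongStep (GM k).mulVecLin (FM k).mulVecLin)^[m] ⊥ =
      coordSubspace ℂ {j : Fin (k + 1) | k < (j : ℕ) + m} := by
    induction m with
    | zero =>
      have hempty : {j : Fin (k + 1) | k < (j : ℕ) + 0} = ∅ := by grind
      rw [hempty, coordSubspace_empty, Function.iterate_zero_apply]
    | succ m ih => rw [Function.iterate_succ_apply', ih, wongStep_GM_FM]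
  rw [wongDim, hiter, ker_GM, coordSubspace_inf, finrank_coordSubspace]
  split_ifs with h
  · rw [Set.ncard_eq_one]
    exact ⟨0, by ext; grind⟩
  · rw [Set.ncard_eq_zero]
    grind

theorem exists_linearEquiv_smul_L1M_add_smul_L2M (k : ℕ) :
    ∃ (f : ((Fin k → ℂ) × (Fin (k + 1) → ℂ)) ≃ₗ[ℂ] (Fin (2 * k + 1) → ℂ))
      (e : (Fin (2 * k + 1) → ℂ) ≃ₗ[ℂ] (Fin (k + 1) → ℂ) × (Fin k → ℂ)), ∀ a b : ℂ,
      (a • L1M k + b • L2M k).mulVecLin =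
        f ∘ₗ (a • FM k + b • GM k).mulVecLin.prodMap (a • FM k + b • GM k)ᵀ.mulVecLin ∘ₗ e := by
  let r : Fin (k + 1) ⊕ Fin k ≃ Fin (2 * k + 1) := finSumFinEquiv.trans (finCongr (by omega))
  let e := (LinearEquiv.funCongrLeft ℂ ℂ r).trans (LinearEquiv.sumArrowLequivProdArrow _ _ ℂ ℂ)
  refine ⟨(LinearEquiv.prodComm ℂ _ _).trans e.symm, e, fun a b => LinearMap.ext fun x => ?_⟩
  have hblocks : a • L1M k + b • L2M k =
      reindex r r (fromBlocks 0 (a • FM k + b • GM k)ᵀ (a • FM k + b • GM k) 0) := by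
    have hadd (M N : Matrix (Fin (k + 1) ⊕ Fin k) (Fin (k + 1) ⊕ Fin k) ℂ) :
        a • reindex r r M + b • reindex r r N = reindex r r (a • M + b • N) := rfl
    rw [L1M, L2M, hadd, fromBlocks_smul, fromBlocks_smul, fromBlocks_add]
    simp only [smul_zero, add_zero, transpose_add, transpose_smul]
  have hmul (y : Fin (k + 1) ⊕ Fin k → ℂ) :=
    fromBlocks_mulVec 0 (a • FM k + b • GM k)ᵀ (a • FM k + b • GM k) 0 y
  simp only [zero_mulVec, zero_add, add_zero] at hmul
  rw [hblocks, mulVecLin_reindex]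
  refine congrArg (LinearEquiv.funCongrLeft ℂ ℂ r.symm) ((hmul _).trans ?_)
  ext (i | i) <;> rfl

theorem wongDim_bot_smul_L1M_add_smul_L2M {k : ℕ} {a b : ℂ}
    (hsurj : Function.Surjective (a • FM k + b • GM k).mulVecLin) (c d : ℂ) (m : ℕ) :
    wongDim (a • L1M k + b • L2M k).mulVecLin (c • L1M k + d • L2M k).mulVecLin ⊥ m =
      wongDim (a • FM k + b • GM k).mulVecLin (c • FM k + d • GM k).mulVecLin ⊥ m := by
  obtain ⟨f, e, hfe⟩ := exists_linearEquiv_smul_L1M_add_smul_L2M k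
  rw [hfe, hfe, wongDim_bot_comp, ← Submodule.prod_bot,
    wongDim_prodMap_of_injective _ _ (injective_mulVecLin_transpose_of_surjective hsurj)]

theorem wongDim_top_smul_L1M_add_smul_L2M {k : ℕ} {a b : ℂ}
    (hsurj : Function.Surjective (a • FM k + b • GM k).mulVecLin) (c d : ℂ) (m : ℕ) :
    wongDim (a • L1M k + b • L2M k).mulVecLin (c • L1M k + d • L2M k).mulVecLin ⊤ m =
      Module.finrank ℂ (LinearMap.ker (a • FM k + b • GM k).mulVecLin) := by
  obtain ⟨f, e, hfe⟩ := exists_linearEquiv_smul_L1M_add_smul_L2M k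
  rw [hfe, hfe, wongDim_top_comp, ← Submodule.prod_top,
    wongDim_prodMap_of_injective _ _ (injective_mulVecLin_transpose_of_surjective hsurj),
    wongDim_top_of_surjective hsurj]

end SingularBlock

section Pencil

/-- The member `a A + b B` of the pencil of a canonical pair `(A, B)`, as a linear map. -/
noncomputable def CanType.pencil (c : CanType) (a b : ℂ) :
    (Fin c.size → ℂ) →ₗ[ℂ] (Fin c.size → ℂ) :=
  (a • c.A + b • c.B).mulVecLin

theorem CanType.pencil_H (k : ℕ) (μ a b : ℂ) :
    (CanType.H k μ).pencil a b = ((a + b * μ) • delM k + b • lamM k 0).mulVecLin := by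
  refine congrArg mulVecLin ?_
  change a • delM k + b • lamM k μ = _
  rw [lamM_eq_smul_delM_add, smul_add, smul_smul, add_smul, add_assoc]

theorem CanType.pencil_K (k : ℕ) (a b : ℂ) :
    (CanType.K k).pencil a b = (b • delM k + a • lamM k 0).mulVecLin :=
  congrArg mulVecLin (add_comm _ _)

theorem CanType.injective_pencil_H (k : ℕ) {μ a b : ℂ} (h : a + b * μ ≠ 0) :
    Function.Injective ((CanType.H k μ).pencil a b) :=
  CanType.pencil_H k μ a b ▸ injective_mulVecLin_smul_delM_add_smul_lamM k h b

theorem CanType.injective_pencil_K (k : ℕ) (a : ℂ) {b : ℂ} (hb : b ≠ 0) :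
    Function.Injective ((CanType.K k).pencil a b) :=
  CanType.pencil_K k a b ▸ injective_mulVecLin_smul_delM_add_smul_lamM k hb a

theorem wongDim_pencil_H_eigenvalue (k : ℕ) (μ : ℂ) (m : ℕ) :
    wongDim ((CanType.H k μ).pencil (-μ) 1) ((CanType.H k μ).pencil 1 0) ⊤ m =
      if m < k then 1 else 0 := by
  rw [CanType.pencil_H, CanType.pencil_H, one_mul, neg_add_cancel, zero_smul, zero_add, one_smul,
    zero_mul, add_zero, one_smul, zero_smul, add_zero]
  exact wongDim_lamM_zero_delM k m

theorem wongDim_pencil_K_infinity (k m : ℕ) :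
    wongDim ((CanType.K k).pencil 1 0) ((CanType.K k).pencil 0 1) ⊤ m =
      if m < k then 1 else 0 := by
  rw [CanType.pencil_K, CanType.pencil_K, zero_smul, one_smul, zero_add, zero_smul, one_smul,
    add_zero]
  exact wongDim_lamM_zero_delM k m

theorem wongDim_bot_pencil_L (k m : ℕ) :
    wongDim ((CanType.L k).pencil 0 1) ((CanType.L k).pencil 1 0) ⊥ m =
      if k < m then 1 else 0 := by
  have hG : (0 : ℂ) • FM k + (1 : ℂ) • GM k = GM k := by rw [zero_smul, one_smul, zero_add]
  have hF : (1 : ℂ) • FM k + (0 : ℂ) • GM k = FM k := by rw [zero_smul, one_smul, add_zero]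
  have hsurj : Function.Surjective ((0 : ℂ) • FM k + (1 : ℂ) • GM k).mulVecLin := by
    simpa only [hG] using surjective_mulVecLin_GM k
  exact (wongDim_bot_smul_L1M_add_smul_L2M hsurj 1 0 m).trans (by rw [hG, hF, wongDim_GM_FM])

theorem wongDim_top_pencil_L_succ {k : ℕ} {a b : ℂ}
    (hsurj : Function.Surjective (a • FM k + b • GM k).mulVecLin) (c d : ℂ) (m : ℕ) :
    wongDim ((CanType.L k).pencil a b) ((CanType.L k).pencil c d) ⊤ (m + 1) =
      wongDim ((CanType.L k).pencil a b) ((CanType.L k).pencil c d) ⊤ m :=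
  (wongDim_top_smul_L1M_add_smul_L2M hsurj c d (m + 1)).trans
    (wongDim_top_smul_L1M_add_smul_L2M hsurj c d m).symm

open Classical in
theorem wongDim_bot_pencil_succ (t : CanType) (m : ℕ) :
    wongDim (t.pencil 0 1) (t.pencil 1 0) ⊥ (m + 1) =
      wongDim (t.pencil 0 1) (t.pencil 1 0) ⊥ m + if t = .L m then 1 else 0 := by
  cases t with
  | H k μ =>
    have hinj : Function.Injective ((CanType.H k μ).pencil 1 0) :=
      CanType.injective_pencil_H k (by simp)
    simp [wongDim_bot_eq_zero_of_injective_right _ hinj]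
  | K k => simp [wongDim_eq_zero_of_injective_left (CanType.injective_pencil_K k 0 one_ne_zero)]
  | L k =>
    simp only [wongDim_bot_pencil_L, CanType.L.injEq]
    grind

open Classical in
theorem wongDim_top_pencil_infinity (t : CanType) (m : ℕ) :
    wongDim (t.pencil 1 0) (t.pencil 0 1) ⊤ m =
      wongDim (t.pencil 1 0) (t.pencil 0 1) ⊤ (m + 1) + if t = .K (m + 1) then 1 else 0 := by
  cases t with
  | H k μ =>
    have hinj : Function.Injective ((CanType.H k μ).pencil 1 0) :=
      CanType.injective_pencil_H k (by simp)
    simp [wongDim_eq_zero_of_injective_left hinj]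
  | K k =>
    simp only [wongDim_pencil_K_infinity, CanType.K.injEq]
    grind
  | L k =>
    have hsurj : Function.Surjective ((1 : ℂ) • FM k + (0 : ℂ) • GM k).mulVecLin := by
      simpa only [one_smul, zero_smul, add_zero] using surjective_mulVecLin_FM k
    simp [wongDim_top_pencil_L_succ hsurj]

open Classical in
theorem wongDim_top_pencil_eigenvalue (t : CanType) (μ : ℂ) (m : ℕ) :
    wongDim (t.pencil (-μ) 1) (t.pencil 1 0) ⊤ m =
      wongDim (t.pencil (-μ) 1) (t.pencil 1 0) ⊤ (m + 1) +
        if t = .H (m + 1) μ then 1 else 0 := by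
  cases t with
  | H k ν =>
    by_cases hν : ν = μ
    · subst hν
      simp only [wongDim_pencil_H_eigenvalue, CanType.H.injEq, and_true]
      grind
    · have hinj : Function.Injective ((CanType.H k ν).pencil (-μ) 1) :=
        CanType.injective_pencil_H k (by grind)
      simp [wongDim_eq_zero_of_injective_left hinj, hν]
  | K k => simp [wongDim_eq_zero_of_injective_left (CanType.injective_pencil_K k (-μ) one_ne_zero)]
  | L k =>
    have hsurj : Function.Surjective (-μ • FM k + (1 : ℂ) • GM k).mulVecLin := by
      simpa only [one_smul] using surjective_mulVecLin_smul_FM_add_GM k (-μ)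
    simp [wongDim_top_pencil_L_succ hsurj]

theorem mulVecLin_smul_blockDiagonal'_add {ι : Type*} [Fintype ι] [DecidableEq ι]
    (X : ι → CanType) (a b : ℂ) :
    (a • blockDiagonal' (fun i => (X i).A) + b • blockDiagonal' (fun i => (X i).B)).mulVecLin =
      (LinearEquiv.piCurry ℂ fun i (_ : Fin (X i).size) => ℂ).symm ∘ₗ
        LinearMap.piMap (fun i => (X i).pencil a b) ∘ₗ
          (LinearEquiv.piCurry ℂ fun i (_ : Fin (X i).size) => ℂ) := by
  rw [← blockDiagonal'_smul, ← blockDiagonal'_smul, ← blockDiagonal'_add,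
    mulVecLin_blockDiagonal']
  rfl

theorem wongDim_bot_blockDiagonal' {ι : Type*} [Fintype ι] [DecidableEq ι] (X : ι → CanType)
    (a b c d : ℂ) (m : ℕ) :
    wongDim
      (a • blockDiagonal' (fun i => (X i).A) + b • blockDiagonal' (fun i => (X i).B)).mulVecLin
      (c • blockDiagonal' (fun i => (X i).A) + d • blockDiagonal' (fun i => (X i).B)).mulVecLin
      ⊥ m = ∑ i, wongDim ((X i).pencil a b) ((X i).pencil c d) ⊥ m := by
  rw [mulVecLin_smul_blockDiagonal'_add, mulVecLin_smul_blockDiagonal'_add, wongDim_bot_comp,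
    ← wongDim_piMap, Submodule.pi_univ_bot]

theorem wongDim_top_blockDiagonal' {ι : Type*} [Fintype ι] [DecidableEq ι] (X : ι → CanType)
    (a b c d : ℂ) (m : ℕ) :
    wongDim
      (a • blockDiagonal' (fun i => (X i).A) + b • blockDiagonal' (fun i => (X i).B)).mulVecLin
      (c • blockDiagonal' (fun i => (X i).A) + d • blockDiagonal' (fun i => (X i).B)).mulVecLin
      ⊤ m = ∑ i, wongDim ((X i).pencil a b) ((X i).pencil c d) ⊤ m := by
  rw [mulVecLin_smul_blockDiagonal'_add, mulVecLin_smul_blockDiagonal'_add, wongDim_top_comp,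
    ← wongDim_piMap, Submodule.pi_top]

variable {ι κ : Type*} [Fintype ι] [Fintype κ] [DecidableEq ι] [DecidableEq κ]
  {X : ι → CanType} {Y : κ → CanType}

theorem sum_wongDim_bot_eq_of_strictlyEquivalentPairs
    (h : StrictlyEquivalentPairs
      (blockDiagonal' fun i => (X i).A, blockDiagonal' fun i => (X i).B)
      (blockDiagonal' fun j => (Y j).A, blockDiagonal' fun j => (Y j).B)) (a b c d : ℂ) (m : ℕ) :
    ∑ i, wongDim ((X i).pencil a b) ((X i).pencil c d) ⊥ m =
      ∑ j, wongDim ((Y j).pencil a b) ((Y j).pencil c d) ⊥ m := by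
  obtain ⟨f, e, hfe⟩ := h.exists_linearEquiv
  rw [← wongDim_bot_blockDiagonal', ← wongDim_bot_blockDiagonal', hfe, hfe, wongDim_bot_comp]

theorem sum_wongDim_top_eq_of_strictlyEquivalentPairs
    (h : StrictlyEquivalentPairs
      (blockDiagonal' fun i => (X i).A, blockDiagonal' fun i => (X i).B)
      (blockDiagonal' fun j => (Y j).A, blockDiagonal' fun j => (Y j).B)) (a b c d : ℂ) (m : ℕ) :
    ∑ i, wongDim ((X i).pencil a b) ((X i).pencil c d) ⊤ m =
      ∑ j, wongDim ((Y j).pencil a b) ((Y j).pencil c d) ⊤ m := by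
  obtain ⟨f, e, hfe⟩ := h.exists_linearEquiv
  rw [← wongDim_top_blockDiagonal', ← wongDim_top_blockDiagonal', hfe, hfe, wongDim_top_comp]

end Pencil

section Fibers

variable {α ι κ : Type*} {X : ι → α} {Y : κ → α}

theorem exists_equiv_of_card_fiber_eq [Finite ι] [Finite κ]
    (h : ∀ c, Nat.card {i // X i = c} = Nat.card {j // Y j = c}) :
    ∃ σ : ι ≃ κ, ∀ i, Y (σ i) = X i :=
  ⟨Equiv.ofFiberEquiv fun c => (Finite.card_eq.1 (h c)).some,
    fun i => Equiv.ofFiberEquiv_map _ i⟩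

variable [Fintype ι] [Fintype κ]

open Classical in
theorem sum_comp_eq_add_card_fiber {f g : α → ℕ} {c : α}
    (hfg : ∀ a, f a = g a + if a = c then 1 else 0) (X : ι → α) :
    ∑ i, f (X i) = ∑ i, g (X i) + Nat.card {i // X i = c} := by
  rw [Nat.card_eq_fintype_card, Fintype.card_subtype, Finset.card_filter,
    ← Finset.sum_add_distrib]
  exact Finset.sum_congr rfl fun i _ => hfg (X i)

open Classical in
theorem card_fiber_eq_of_sum_comp_eq {f g : α → ℕ} {c : α}
    (hfg : ∀ a, f a = g a + if a = c then 1 else 0) (hf : ∑ i, f (X i) = ∑ j, f (Y j))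
    (hg : ∑ i, g (X i) = ∑ j, g (Y j)) :
    Nat.card {i // X i = c} = Nat.card {j // Y j = c} := by
  rwa [sum_comp_eq_add_card_fiber hfg, sum_comp_eq_add_card_fiber hfg, hg, Nat.add_left_cancel_iff]
    at hf

end Fibers

theorem card_fiber_eq_zero_of_size_eq_zero {ι : Type*} {X : ι → CanType} (hX : ∀ i, 0 < (X i).size)
    {c : CanType} (hc : c.size = 0) : Nat.card {i // X i = c} = 0 := by
  have : IsEmpty {i // X i = c} := ⟨fun ⟨i, hi⟩ => (hX i).ne' (hi.symm ▸ hc)⟩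
  exact Nat.card_of_isEmpty

theorem canonical_form_unique_general {ι κ : Type*} [Fintype ι] [Fintype κ] [DecidableEq ι]
    [DecidableEq κ] (X : ι → CanType) (Y : κ → CanType) (hX : ∀ i, 0 < (X i).size)
    (hY : ∀ j, 0 < (Y j).size)
    (h : StrictlyEquivalentPairs
      (blockDiagonal' fun i => (X i).A, blockDiagonal' fun i => (X i).B)
      (blockDiagonal' fun j => (Y j).A, blockDiagonal' fun j => (Y j).B)) :
    ∃ σ : ι ≃ κ, ∀ i, Y (σ i) = X i := by
  have hbot := sum_wongDim_bot_eq_of_strictlyEquivalentPairs h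
  have htop := sum_wongDim_top_eq_of_strictlyEquivalentPairs h
  refine exists_equiv_of_card_fiber_eq fun c => ?_
  rcases Nat.eq_zero_or_pos c.size with hc | hc
  · rw [card_fiber_eq_zero_of_size_eq_zero hX hc, card_fiber_eq_zero_of_size_eq_zero hY hc]
  · match c, hc with
    | .H (m + 1) μ, _ =>
      exact card_fiber_eq_of_sum_comp_eq (wongDim_top_pencil_eigenvalue · μ m)
        (htop (-μ) 1 1 0 m) (htop (-μ) 1 1 0 (m + 1))
    | .K (m + 1), _ =>
      exact card_fiber_eq_of_sum_comp_eq (wongDim_top_pencil_infinity · m)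
        (htop 1 0 0 1 m) (htop 1 0 0 1 (m + 1))
    | .L m, _ =>
      exact card_fiber_eq_of_sum_comp_eq (wongDim_bot_pencil_succ · m)
        (hbot 0 1 1 0 (m + 1)) (hbot 0 1 1 0 m)

theorem CanType.size_pos_of_param_pos {c : CanType} (hc : 0 < c.param) : 0 < c.size := by
  cases c with
  | H k μ => exact hc
  | K k => exact hc
  | L k => exact Nat.succ_pos _

noncomputable section

/-- **Uniqueness of the canonical form (Thompson).** If two direct sums of canonical
pairs (with positive size parameters) are congruent, then they have the same number of
summands and the summands coincide up to a permutation. -/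
theorem canonical_form_unique {t s : ℕ} (X : Fin t → CanType) (Y : Fin s → CanType)
    (hX : ∀ i, 0 < (X i).param) (hY : ∀ j, 0 < (Y j).param)
    (h : CongruentPairs
      (Matrix.blockDiagonal' fun i => (X i).A, Matrix.blockDiagonal' fun i => (X i).B)
      (Matrix.blockDiagonal' fun j => (Y j).A, Matrix.blockDiagonal' fun j => (Y j).B)) :
    s = t ∧ ∃ σ : Fin t ≃ Fin s, ∀ i, Y (σ i) = X i := by
  obtain ⟨σ, hσ⟩ := canonical_form_unique_general X Y
    (fun i => CanType.size_pos_of_param_pos (hX i))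
    (fun j => CanType.size_pos_of_param_pos (hY j)) h.strictlyEquivalentPairs
  exact ⟨(Fin.equiv_iff_eq.1 ⟨σ⟩).symm, σ, hσ⟩

end
end

section
/- Let (A,B) = (A_1,B_1) ⊕ ⋯ ⊕ (A_t,B_t) be a block-diagonal pair of symmetric complex matrices, where each (A_i,B_i) is a pair of symmetric n_i×n_i matrices, and let 𝒟(ℂ) be a pattern space in Sym_n(ℂ)×Sym_n(ℂ) (n = n_1+⋯+n_t) given by symmetric sets of positions, partitioned conformably into block pattern spaces 𝒟_{ij}(ℂ) ⊆ ℂ^{n_i×n_j}×ℂ^{n_i×n_j} with 𝒟_{ji}(ℂ) = {(X^T, Y^T) : (X,Y) ∈ 𝒟_{ij}(ℂ)}. Then the deformation (X,Y) ↦ (A+X, B+Y) parametrized by 𝒟(ℂ) is a miniversal deformation of (A,B) if and only if: (i) for each i, every coset of T(A_i,B_i) in Sym_{n_i}(ℂ)×Sym_{n_i}(ℂ) contains exactly one element of 𝒟_{ii}(ℂ); and (ii) for each i < j, every coset of the subspace W_{ij} := { (R^T A_j + A_i S, R^T B_j + B_i S) : S ∈ ℂ^{n_i×n_j}, R ∈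 ℂ^{n_j×n_i} } in ℂ^{n_i×n_j}×ℂ^{n_i×n_j} contains exactly one element of 𝒟_{ij}(ℂ). -/
open Matrix Filter

noncomputable section

attribute [local instance] Matrix.normedAddCommGroup Matrix.normedSpace

/-- The space of pairs of symmetric `ι × ι` complex matrices, as a subspace of all pairs. -/
def SymPair (ι : Type) [Fintype ι] : Submodule ℂ (Matrix ι ι ℂ × Matrix ι ι ℂ) where
  carrier := {p | p.1.IsSymm ∧ p.2.IsSymm}
  add_mem' ha hb := ⟨ha.1.add hb.1, ha.2.add hb.2⟩
  zero_mem' := ⟨Matrix.isSymm_zero, Matrix.isSymm_zero⟩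
  smul_mem' c p hp := ⟨hp.1.smul c, hp.2.smul c⟩

/-- The linear map `C ↦ (CᵀA + AC, CᵀB + BC)`. -/
def congMap {ι : Type} [Fintype ι] (A B : Matrix ι ι ℂ) :
    Matrix ι ι ℂ →ₗ[ℂ] Matrix ι ι ℂ × Matrix ι ι ℂ where
  toFun C := (Cᵀ * A + A * C, Cᵀ * B + B * C)
  map_add' C D := by
    simp only [Matrix.transpose_add, Matrix.add_mul, Matrix.mul_add, Prod.mk_add_mk, Prod.ext_iff]
    constructor <;> abel
  map_smul' c C := by
    simp only [Matrix.transpose_smul, Matrix.smul_mul, Matrix.mul_smul, RingHom.id_apply,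
      Prod.smul_mk, smul_add]

/-- `T(A,B) = {(CᵀA + AC, CᵀB + BC) : C}`, the tangent space to the congruence class. -/
def TSpace {ι : Type} [Fintype ι] (A B : Matrix ι ι ℂ) :
    Submodule ℂ (Matrix ι ι ℂ × Matrix ι ι ℂ) :=
  LinearMap.range (congMap A B)

/-- The pattern space determined by two sets of positions: pairs of symmetric matrices
supported on `I1` resp. `I2`. -/
def Pattern {ι : Type} [Fintype ι] (I1 I2 : Set (ι × ι)) :
    Submodule ℂ (Matrix ι ι ℂ × Matrix ι ι ℂ) where
  carrier := {p | p.1.IsSymm ∧ p.2.IsSymm ∧ (∀ i j, (i, j) ∉ I1 → p.1 i j = 0) ∧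
    (∀ i j, (i, j) ∉ I2 → p.2 i j = 0)}
  add_mem' := by
    rintro a b ⟨ha1, ha2, ha3, ha4⟩ ⟨hb1, hb2, hb3, hb4⟩
    exact ⟨ha1.add hb1, ha2.add hb2,
      fun i j h => by show a.1 i j + b.1 i j = 0; rw [ha3 i j h, hb3 i j h, add_zero],
      fun i j h => by show a.2 i j + b.2 i j = 0; rw [ha4 i j h, hb4 i j h, add_zero]⟩
  zero_mem' := ⟨Matrix.isSymm_zero, Matrix.isSymm_zero, fun _ _ _ => rfl, fun _ _ _ => rfl⟩
  smul_mem' := by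
    rintro c a ⟨ha1, ha2, ha3, ha4⟩
    exact ⟨ha1.smul c, ha2.smul c,
      fun i j h => by show c * a.1 i j = 0; rw [ha3 i j h, mul_zero],
      fun i j h => by show c * a.2 i j = 0; rw [ha4 i j h, mul_zero]⟩

theorem Pattern_le {ι : Type} [Fintype ι] (I1 I2 : Set (ι × ι)) :
    Pattern I1 I2 ≤ SymPair ι := fun _ hp => ⟨hp.1, hp.2.1⟩

/-- A deformation of a pair `(A, B)` of symmetric `ι × ι` complex matrices, with parameter
space `P`: a map defined near `0 : P`, holomorphic at `0` (i.e. each matrix entry is an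
analytic function of the parameter at `0`), taking values in pairs of symmetric matrices,
and sending `0` to `(A, B)`. -/
structure Deformation (ι : Type) [Fintype ι] (P : Type*) [NormedAddCommGroup P]
    [NormedSpace ℂ P] (A B : Matrix ι ι ℂ) where
  map : P → Matrix ι ι ℂ × Matrix ι ι ℂ
  analytic₁ : ∀ i j, AnalyticAt ℂ (fun p => (map p).1 i j) 0
  analytic₂ : ∀ i j, AnalyticAt ℂ (fun p => (map p).2 i j) 0
  symm : ∀ᶠ p in nhds (0 : P), (map p).1.IsSymm ∧ (map p).2.IsSymm
  init : map 0 = (A, B)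

/-- Two (maps underlying) deformations with the same parameter space are equivalent if
`g p = (I p)ᵀ • f p • (I p)` near `0`, for a family `I` of matrices holomorphic at `0`
with `I 0 = 1`. -/
def DefEquiv {ι : Type} [Fintype ι] [DecidableEq ι] {P : Type*} [NormedAddCommGroup P]
    [NormedSpace ℂ P] (f g : P → Matrix ι ι ℂ × Matrix ι ι ℂ) : Prop :=
  ∃ I : P → Matrix ι ι ℂ, (∀ i j, AnalyticAt ℂ (fun p => I p i j) 0) ∧ I 0 = 1 ∧
    ∀ᶠ p in nhds (0 : P), g p = ((I p)ᵀ * (f p).1 * I p, (I p)ᵀ * (f p).2 * I p)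

/-- A deformation is versal if every deformation of the same pair (with a finite-dimensional
parameter space) is equivalent to a holomorphic reparametrization of it. -/
def IsVersal {ι : Type} [Fintype ι] [DecidableEq ι] {P : Type*} [NormedAddCommGroup P]
    [NormedSpace ℂ P] {A B : Matrix ι ι ℂ} (𝒜 : Deformation ι P A B) : Prop :=
  ∀ (Q : Type) (_ : NormedAddCommGroup Q), ∀ (_ : NormedSpace ℂ Q)
    (_ : FiniteDimensional ℂ Q) (ℬ : Deformation ι Q A B),
    ∃ φ : Q → P, AnalyticAt ℂ φ 0 ∧ φ 0 = 0 ∧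
      DefEquiv (fun q => 𝒜.map (φ q)) ℬ.map

/-- A versal deformation is miniversal if its parameter space has the minimal possible
dimension among versal deformations. -/
def IsMiniversal {ι : Type} [Fintype ι] [DecidableEq ι] {P : Type*} [NormedAddCommGroup P]
    [NormedSpace ℂ P] {A B : Matrix ι ι ℂ} (𝒜 : Deformation ι P A B) : Prop :=
  IsVersal 𝒜 ∧ ∀ (Q : Type) (_ : NormedAddCommGroup Q), ∀ (_ : NormedSpace ℂ Q)
    (_ : FiniteDimensional ℂ Q) (ℬ : Deformation ι Q A B),
    IsVersal ℬ → Module.finrank ℂ P ≤ Module.finrank ℂ Q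

/-- Entry evaluation is analytic on a finite-dimensional parameter space of matrix pairs. -/
theorem analyticAt_entry {ι : Type} [Fintype ι]
    (D : Submodule ℂ (Matrix ι ι ℂ × Matrix ι ι ℂ)) (i j : ι) :
    AnalyticAt ℂ (fun p : D => ((p : Matrix ι ι ℂ × Matrix ι ι ℂ)).1 i j) 0 ∧
    AnalyticAt ℂ (fun p : D => ((p : Matrix ι ι ℂ × Matrix ι ι ℂ)).2 i j) 0 := by
  constructor
  · let L : D →ₗ[ℂ] ℂ :=
      { toFun := fun p => (p : Matrix ι ι ℂ × Matrix ι ι ℂ).1 i j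
        map_add' := fun x y => rfl
        map_smul' := fun c x => rfl }
    exact (LinearMap.toContinuousLinearMap L).analyticAt 0
  · let L : D →ₗ[ℂ] ℂ :=
      { toFun := fun p => (p : Matrix ι ι ℂ × Matrix ι ι ℂ).2 i j
        map_add' := fun x y => rfl
        map_smul' := fun c x => rfl }
    exact (LinearMap.toContinuousLinearMap L).analyticAt 0

/-- The deformation `(X, Y) ↦ (A + X, B + Y)` of `(A, B)`, parametrized by a subspace `D`
of the space of pairs of symmetric matrices. -/
def patternDeformation {ι : Type} [Fintype ι] (A B : Matrix ι ι ℂ)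
    (hA : A.IsSymm) (hB : B.IsSymm) (D : Submodule ℂ (Matrix ι ι ℂ × Matrix ι ι ℂ))
    (hD : D ≤ SymPair ι) : Deformation ι D A B where
  map p := (A + (p : Matrix ι ι ℂ × Matrix ι ι ℂ).1, B + (p : Matrix ι ι ℂ × Matrix ι ι ℂ).2)
  analytic₁ i j := by
    have h := (analyticAt_entry D i j).1
    have : (fun p : D => (A + (p : Matrix ι ι ℂ × Matrix ι ι ℂ).1) i j)
        = fun p : D => A i j + (p : Matrix ι ι ℂ × Matrix ι ι ℂ).1 i j := rfl
    rw [this]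
    exact analyticAt_const.add h
  analytic₂ i j := by
    have h := (analyticAt_entry D i j).2
    have : (fun p : D => (B + (p : Matrix ι ι ℂ × Matrix ι ι ℂ).2) i j)
        = fun p : D => B i j + (p : Matrix ι ι ℂ × Matrix ι ι ℂ).2 i j := rfl
    rw [this]
    exact analyticAt_const.add h
  symm := Eventually.of_forall fun p =>
    ⟨hA.add (hD p.2).1, hB.add (hD p.2).2⟩
  init := by simp

end

noncomputable section

attribute [local instance] Matrix.normedAddCommGroup Matrix.normedSpace

theorem blockDiagonal'_isSymm {t : ℕ} {ns : Fin t → ℕ}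
    (A : ∀ i, Matrix (Fin (ns i)) (Fin (ns i)) ℂ) (hA : ∀ i, (A i).IsSymm) :
    (Matrix.blockDiagonal' A).IsSymm := by
  unfold Matrix.IsSymm
  rw [Matrix.blockDiagonal'_transpose]
  exact congrArg Matrix.blockDiagonal' (funext fun i => hA i)

/-- The linear map `(S, R) ↦ (Rᵀ A_j + A_i S, Rᵀ B_j + B_i S)`. -/
def offMap {ι κ : Type} [Fintype ι] [Fintype κ] (Ai Bi : Matrix ι ι ℂ)
    (Aj Bj : Matrix κ κ ℂ) :
    (Matrix ι κ ℂ × Matrix κ ι ℂ) →ₗ[ℂ] (Matrix ι κ ℂ × Matrix ι κ ℂ) where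
  toFun SR := (SR.2ᵀ * Aj + Ai * SR.1, SR.2ᵀ * Bj + Bi * SR.1)
  map_add' x y := by
    simp only [Prod.fst_add, Prod.snd_add, Matrix.transpose_add, Matrix.add_mul,
      Matrix.mul_add, Prod.mk_add_mk, Prod.ext_iff]
    constructor <;> abel
  map_smul' c x := by
    simp only [Prod.smul_fst, Prod.smul_snd, Matrix.transpose_smul, Matrix.smul_mul,
      Matrix.mul_smul, RingHom.id_apply, Prod.smul_mk, smul_add]

/-- `W = {(Rᵀ A_j + A_i S, Rᵀ B_j + B_i S) : S, R}`. -/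
def WSpace {ι κ : Type} [Fintype ι] [Fintype κ] (Ai Bi : Matrix ι ι ℂ)
    (Aj Bj : Matrix κ κ ℂ) : Submodule ℂ (Matrix ι κ ℂ × Matrix ι κ ℂ) :=
  LinearMap.range (offMap Ai Bi Aj Bj)

/-- The space of pairs of (rectangular) matrices supported on given sets of positions. -/
def entryPattern {ι κ : Type} (S1 S2 : Set (ι × κ)) :
    Submodule ℂ (Matrix ι κ ℂ × Matrix ι κ ℂ) where
  carrier := {x | (∀ i j, (i, j) ∉ S1 → x.1 i j = 0) ∧ (∀ i j, (i, j) ∉ S2 → x.2 i j = 0)}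
  add_mem' := by
    rintro a b ⟨ha1, ha2⟩ ⟨hb1, hb2⟩
    exact ⟨fun i j h => by show a.1 i j + b.1 i j = 0; rw [ha1 i j h, hb1 i j h, add_zero],
      fun i j h => by show a.2 i j + b.2 i j = 0; rw [ha2 i j h, hb2 i j h, add_zero]⟩
  zero_mem' := ⟨fun _ _ _ => rfl, fun _ _ _ => rfl⟩
  smul_mem' := by
    rintro c a ⟨ha1, ha2⟩
    exact ⟨fun i j h => by show c * a.1 i j = 0; rw [ha1 i j h, mul_zero],
      fun i j h => by show c * a.2 i j = 0; rw [ha2 i j h, mul_zero]⟩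

end

noncomputable section

attribute [local instance] Matrix.normedAddCommGroup Matrix.normedSpace

/-! The tangent space at `(A, B)` to its congruence class is `T(A, B)`, and by the inverse function
theorem a deformation is versal exactly when its differential at `0` is onto `Sym × Sym` modulo
`T(A, B)`. Counting dimensions, the deformation by a subspace `D` is miniversal exactly when `D` is
a complement of `T(A, B)` in `Sym × Sym`.

Being a complement can be tested block by block. Averaging with the transpose shows that `T(A, B)`
is the symmetric part of `W = {(Rᵀ A + A S, Rᵀ B + B S)}`, in which `S` and `R` are independent, so
that for a block-diagonal pair `W` is the direct sum of its blocks. A symmetric pair is determined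
by its blocks on and above the diagonal, and those above the diagonal are arbitrary.
-/

section Transversal

variable {R V : Type*} [Ring R] [AddCommGroup V] [Module R V]

/-- `D` is a transversal of `T` in `S`: every coset of `T` by an element of `S` contains exactly one
element of `D`. -/
def IsTransversal (S T D : Submodule R V) : Prop :=
  ∀ v ∈ S, ∃! d, d ∈ D ∧ v - d ∈ T

theorem isTransversal_iff {S T D : Submodule R V} :
    IsTransversal S T D ↔ S ≤ T ⊔ D ∧ T ⊓ D = ⊥ := by
  constructor
  · intro h
    refine ⟨fun v hv => ?_, (Submodule.eq_bot_iff _).2 fun d ⟨hdT, hdD⟩ => ?_⟩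
    · obtain ⟨d, ⟨hd, hvd⟩, -⟩ := h v hv
      simpa using Submodule.add_mem_sup hvd hd
    · exact (h 0 S.zero_mem).unique ⟨hdD, by simpa using hdT⟩ ⟨D.zero_mem, by simp⟩
  · rintro ⟨hle, hbot⟩ v hv
    obtain ⟨x, hx, d, hd, rfl⟩ := Submodule.mem_sup.1 (hle hv)
    refine ⟨d, ⟨hd, by simpa using hx⟩, fun e ⟨he, hxe⟩ => ?_⟩
    have hmem : d - e ∈ T ⊓ D :=
      ⟨by simpa [add_sub_assoc] using T.sub_mem hxe hx, D.sub_mem hd he⟩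
    exact (sub_eq_zero.1 ((Submodule.eq_bot_iff _).1 hbot _ hmem)).symm

end Transversal

section Calculus

theorem exists_analyticAt_rightInverse {𝕜 E F : Type*} [RCLike 𝕜] [NormedAddCommGroup E]
    [NormedSpace 𝕜 E] [NormedAddCommGroup F] [NormedSpace 𝕜 F] [FiniteDimensional 𝕜 F]
    {f : E → F} {f' : E →L[𝕜] F} {a : E} (hf : AnalyticAt 𝕜 f a) (hf' : HasFDerivAt f f' a)
    (hsurj : Function.Surjective f') :
    ∃ g : F → E, AnalyticAt 𝕜 g (f a) ∧ g (f a) = a ∧ ∀ᶠ y in nhds (f a), f (g y) = y := by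
  have := FiniteDimensional.complete 𝕜 F
  obtain ⟨s, hs⟩ := f'.exists_rightInverse_of_surjective (LinearMap.range_eq_top.2 hsurj)
  have hline : HasFDerivAt (fun y => a + s y) s 0 := s.hasFDerivAt.const_add a
  have hzero : a + s 0 = a := by simp
  have hana : AnalyticAt 𝕜 (fun y => a + s y) 0 := analyticAt_const.add (s.analyticAt 0)
  have hcomp : ContDiffAt 𝕜 ⊤ (fun y => f (a + s y)) 0 :=
    (AnalyticAt.fun_comp (by rwa [hzero]) hana).contDiffAt
  have hcomp' : HasFDerivAt (fun y => f (a + s y))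
      (ContinuousLinearEquiv.refl 𝕜 F : F →L[𝕜] F) 0 := by
    have := HasFDerivAt.comp (0 : F) (by rwa [hzero]) hline
    rwa [hs] at this
  have hn : (⊤ : WithTop ℕ∞) ≠ 0 := by simp
  let k := hcomp.localInverse hcomp' hn
  have hk : AnalyticAt 𝕜 k (f a) := by
    simpa using (hcomp.to_localInverse hcomp' hn).analyticAt
  have hk0 : k (f a) = 0 := by simpa using hcomp.localInverse_apply_image hcomp' hn
  refine ⟨fun y => a + s (k y), analyticAt_const.add ((s.analyticAt _).comp hk), by simp [hk0], ?_⟩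
  simpa [k, ContDiffAt.localInverse] using
    (hcomp.hasStrictFDerivAt' hcomp' hn).eventually_right_inverse

theorem analyticAt_matrix_iff {𝕜 ι κ E : Type*} [NontriviallyNormedField 𝕜] [Fintype ι]
    [Fintype κ] [NormedAddCommGroup E] [NormedSpace 𝕜 E] {X : E → Matrix ι κ 𝕜} {x : E} :
    AnalyticAt 𝕜 X x ↔ ∀ i j, AnalyticAt 𝕜 (fun p => X p i j) x :=
  analyticAt_pi_iff.trans (forall_congr' fun _ => analyticAt_pi_iff)

end Calculus

section Congruence

variable {ι : Type} [Fintype ι]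

/-- The action `(A, B) ↦ (Cᵀ A C, Cᵀ B C)` of a matrix `C` by congruence. -/
def congrPair (C : Matrix ι ι ℂ) (p : Matrix ι ι ℂ × Matrix ι ι ℂ) :
    Matrix ι ι ℂ × Matrix ι ι ℂ :=
  (Cᵀ * p.1 * C, Cᵀ * p.2 * C)

theorem congrPair_mem_symPair {p : Matrix ι ι ℂ × Matrix ι ι ℂ} (hp : p ∈ SymPair ι)
    (C : Matrix ι ι ℂ) : congrPair C p ∈ SymPair ι := by
  constructor <;> simp [congrPair, Matrix.IsSymm, Matrix.mul_assoc, hp.1.eq, hp.2.eq]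

variable {E : Type*} [NormedAddCommGroup E] [NormedSpace ℂ E] {x : E}
  {C : E → Matrix ι ι ℂ} {f : E → Matrix ι ι ℂ × Matrix ι ι ℂ}

theorem analyticAt_congrPair (hC : AnalyticAt ℂ C x) (hf : AnalyticAt ℂ f x) :
    AnalyticAt ℂ (fun y => congrPair (C y) (f y)) x := by
  classical
  have hT : AnalyticAt ℂ (fun y => (C y)ᵀ) x :=
    analyticAt_matrix_iff.2 fun i j => analyticAt_matrix_iff.1 hC j i
  have hmul {X Y : E → Matrix ι ι ℂ} (hX : AnalyticAt ℂ X x) (hY : AnalyticAt ℂ Y x) :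
      AnalyticAt ℂ (fun y => X y * Y y) x :=
    ((LinearMap.mul ℂ (Matrix ι ι ℂ)).toContinuousBilinearMap.analyticAt_bilinear _).comp₂ hX hY
  exact (hmul (hmul hT (analyticAt_fst.comp hf)) hC).prod
    (hmul (hmul hT (analyticAt_snd.comp hf)) hC)

theorem fderiv_congrPair_apply [DecidableEq ι] {A B : Matrix ι ι ℂ} {C' : E →L[ℂ] Matrix ι ι ℂ}
    {f' : E →L[ℂ] Matrix ι ι ℂ × Matrix ι ι ℂ} (hC' : HasFDerivAt C C' x)
    (hf' : HasFDerivAt f f' x) (hC : C x = 1) (hf : f x = (A, B)) (v : E) :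
    fderiv ℂ (fun y => congrPair (C y) (f y)) x v = congMap A B (C' v) + f' v := by
  let mulL := (LinearMap.mul ℂ (Matrix ι ι ℂ)).toContinuousBilinearMap
  have hT := (transposeLinearEquiv ι ι ℂ ℂ).toLinearMap.toContinuousLinearMap.hasFDerivAt.comp x hC'
  have h₁ := mulL.hasFDerivAt_of_bilinear (mulL.hasFDerivAt_of_bilinear hT hf'.fst) hC'
  have h₂ := mulL.hasFDerivAt_of_bilinear (mulL.hasFDerivAt_of_bilinear hT hf'.snd) hC'
  have leibniz {M N : Matrix ι ι ℂ} (hMN : M = N) (C' M' : Matrix ι ι ℂ) :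
      (C x)ᵀ * M * C' + ((C x)ᵀ * M' + C'ᵀ * M) * C x = C'ᵀ * N + N * C' + M' := by
    simp only [hMN, hC, transpose_one, one_mul, mul_one]
    abel
  exact (DFunLike.congr_fun (h₁.prodMk h₂).fderiv v).trans
    (Prod.ext (leibniz (congrArg Prod.fst hf) _ _) (leibniz (congrArg Prod.snd hf) _ _))

end Congruence

section Symmetrization

/-- Simultaneous transposition of a pair of matrices. -/
def transposePair {ι κ : Type} :
    (Matrix ι κ ℂ × Matrix ι κ ℂ) →ₗ[ℂ] Matrix κ ι ℂ × Matrix κ ι ℂ :=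
  (transposeLinearEquiv ι κ ℂ ℂ).toLinearMap.prodMap (transposeLinearEquiv ι κ ℂ ℂ).toLinearMap

theorem transposePair_apply {ι κ : Type} (p : Matrix ι κ ℂ × Matrix ι κ ℂ) :
    transposePair p = (p.1ᵀ, p.2ᵀ) :=
  rfl

@[simp]
theorem transposePair_transposePair {ι κ : Type} (p : Matrix ι κ ℂ × Matrix ι κ ℂ) :
    transposePair (transposePair p) = p :=
  rfl

variable {ι : Type} {p : Matrix ι ι ℂ × Matrix ι ι ℂ}

theorem mem_symPair_iff [Fintype ι] : p ∈ SymPair ι ↔ transposePair p = p :=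
  (Prod.ext_iff (x := transposePair p) (y := p)).symm

variable (ι) in
/-- The projection of the pairs of matrices onto the pairs of symmetric matrices along the pairs of
skew-symmetric ones. -/
def symmetrize : (Matrix ι ι ℂ × Matrix ι ι ℂ) →ₗ[ℂ] Matrix ι ι ℂ × Matrix ι ι ℂ :=
  (1 / 2 : ℂ) • (LinearMap.id + transposePair)

theorem symmetrize_apply : symmetrize ι p = (1 / 2 : ℂ) • (p + transposePair p) :=
  rfl

theorem symmetrize_mem_symPair [Fintype ι] (p : Matrix ι ι ℂ × Matrix ι ι ℂ) :
    symmetrize ι p ∈ SymPair ι := by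
  simp [mem_symPair_iff, symmetrize_apply, add_comm]

theorem symmetrize_eq_self [Fintype ι] (hp : p ∈ SymPair ι) : symmetrize ι p = p := by
  rw [symmetrize_apply, mem_symPair_iff.1 hp, ← two_smul ℂ p, smul_smul]
  norm_num

theorem symmetrize_mem {W : Submodule ℂ (Matrix ι ι ℂ × Matrix ι ι ℂ)}
    (hW : ∀ p ∈ W, transposePair p ∈ W) (hp : p ∈ W) : symmetrize ι p ∈ W :=
  W.smul_mem _ (W.add_mem hp (hW p hp))

theorem symPair_le_sup_iff [Fintype ι] {W E : Submodule ℂ (Matrix ι ι ℂ × Matrix ι ι ℂ)}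
    (hW : ∀ p ∈ W, transposePair p ∈ W) (hE : ∀ p ∈ E, transposePair p ∈ E) :
    SymPair ι ≤ (SymPair ι ⊓ W) ⊔ (SymPair ι ⊓ E) ↔ SymPair ι ≤ W ⊔ E := by
  refine ⟨fun h => h.trans (sup_le_sup inf_le_right inf_le_right), fun h p hp => ?_⟩
  obtain ⟨w, hw, e, he, rfl⟩ := Submodule.mem_sup.1 (h hp)
  rw [← symmetrize_eq_self hp, map_add]
  exact Submodule.add_mem_sup ⟨symmetrize_mem_symPair w, symmetrize_mem hW hw⟩
    ⟨symmetrize_mem_symPair e, symmetrize_mem hE he⟩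

end Symmetrization

section Versality

variable {ι : Type} [Fintype ι] {A B : Matrix ι ι ℂ}
  {P : Type*} [NormedAddCommGroup P] [NormedSpace ℂ P]

theorem TSpace_le_symPair (hA : A.IsSymm) (hB : B.IsSymm) : TSpace A B ≤ SymPair ι := by
  rintro _ ⟨C, rfl⟩
  constructor <;> simp [congMap, Matrix.IsSymm, hA.eq, hB.eq, add_comm]

theorem Deformation.analyticAt (𝒜 : Deformation ι P A B) : AnalyticAt ℂ 𝒜.map 0 :=
  (analyticAt_matrix_iff.2 𝒜.analytic₁).prod (analyticAt_matrix_iff.2 𝒜.analytic₂)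

theorem Deformation.mem_symPair (𝒜 : Deformation ι P A B) : (A, B) ∈ SymPair ι :=
  𝒜.init ▸ 𝒜.symm.self_of_nhds

variable [DecidableEq ι] {𝒜 : Deformation ι P A B}

theorem IsVersal.symPair_le (h : IsVersal 𝒜) :
    SymPair ι ≤ TSpace A B ⊔ LinearMap.range (fderiv ℂ 𝒜.map 0).toLinearMap := by
  let ℬ := patternDeformation A B 𝒜.mem_symPair.1 𝒜.mem_symPair.2 (SymPair ι) le_rfl
  obtain ⟨φ, hφ, hφ0, I, hI, hI0, hℬ⟩ := h (SymPair ι) _ _ inferInstance ℬ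
  have h𝒜 : HasFDerivAt 𝒜.map (fderiv ℂ 𝒜.map 0) (φ 0) :=
    hφ0.symm ▸ 𝒜.analyticAt.differentiableAt.hasFDerivAt
  have hℬ' : HasFDerivAt ℬ.map (SymPair ι).subtypeL 0 :=
    (SymPair ι).subtypeL.hasFDerivAt.const_add (A, B)
  intro p hp
  have hp' : p = congMap A B (fderiv ℂ I 0 ⟨p, hp⟩) +
      fderiv ℂ 𝒜.map 0 (fderiv ℂ φ 0 ⟨p, hp⟩) := calc
    p = fderiv ℂ ℬ.map 0 ⟨p, hp⟩ := (DFunLike.congr_fun hℬ'.fderiv (⟨p, hp⟩ : SymPair ι)).symm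
    _ = fderiv ℂ (fun q => congrPair (I q) (𝒜.map (φ q))) 0 ⟨p, hp⟩ :=
      DFunLike.congr_fun (EventuallyEq.fderiv_eq hℬ) _
    _ = _ := fderiv_congrPair_apply (analyticAt_matrix_iff.2 hI).differentiableAt.hasFDerivAt
      (h𝒜.comp 0 hφ.differentiableAt.hasFDerivAt) hI0 ((congrArg 𝒜.map hφ0).trans 𝒜.init) _
  rw [hp']
  exact Submodule.add_mem_sup ⟨_, rfl⟩ ⟨_, rfl⟩

/-- The map `(C, v) ↦ (1 + C)ᵀ 𝒜(v) (1 + C)`, whose image near `(0, 0)` consists of the pairs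
congruent to a member of `𝒜` through a matrix close to `1`. -/
def Deformation.orbitMap (𝒜 : Deformation ι P A B) (x : Matrix ι ι ℂ × P) :
    Matrix ι ι ℂ × Matrix ι ι ℂ :=
  congrPair (1 + x.1) (𝒜.map x.2)

theorem Deformation.orbitMap_zero (𝒜 : Deformation ι P A B) : 𝒜.orbitMap (0, 0) = (A, B) := by
  simp [orbitMap, congrPair, 𝒜.init]

theorem Deformation.analyticAt_orbitMap (𝒜 : Deformation ι P A B) :
    AnalyticAt ℂ 𝒜.orbitMap (0, 0) :=
  analyticAt_congrPair (analyticAt_const.add analyticAt_fst)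
    (𝒜.analyticAt.comp (x := (0, 0)) analyticAt_snd)

theorem Deformation.fderiv_orbitMap_apply (𝒜 : Deformation ι P A B) (C : Matrix ι ι ℂ) (v : P) :
    fderiv ℂ 𝒜.orbitMap (0, 0) (C, v) = congMap A B C + fderiv ℂ 𝒜.map 0 v := by
  have hC : HasFDerivAt (fun x : Matrix ι ι ℂ × P => 1 + x.1) (.fst ℂ _ _) (0, 0) :=
    hasFDerivAt_fst.const_add 1
  have h𝒜 : HasFDerivAt (fun x : Matrix ι ι ℂ × P => 𝒜.map x.2) _ (0, 0) :=
    𝒜.analyticAt.differentiableAt.hasFDerivAt.comp (0, 0) hasFDerivAt_snd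
  exact fderiv_congrPair_apply hC h𝒜 (add_zero 1) 𝒜.init (C, v)

theorem exists_analyticAt_orbitMap_eq
    (h : SymPair ι ≤ TSpace A B ⊔ LinearMap.range (fderiv ℂ 𝒜.map 0).toLinearMap) :
    ∃ ψ : Matrix ι ι ℂ × Matrix ι ι ℂ → Matrix ι ι ℂ × P, AnalyticAt ℂ ψ (A, B) ∧
      ψ (A, B) = (0, 0) ∧ ∀ᶠ q in nhds (A, B), q ∈ SymPair ι → 𝒜.orbitMap (ψ q) = q := by
  let π : Matrix ι ι ℂ × Matrix ι ι ℂ →L[ℂ] SymPair ι :=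
    ((symmetrize ι).codRestrict (SymPair ι) symmetrize_mem_symPair).toContinuousLinearMap
  have hπ {p : Matrix ι ι ℂ × Matrix ι ι ℂ} (hp : p ∈ SymPair ι) : (π p).1 = p :=
    symmetrize_eq_self hp
  have hsurj : Function.Surjective (π ∘L fderiv ℂ 𝒜.orbitMap (0, 0)) := by
    rintro ⟨p, hp⟩
    obtain ⟨_, ⟨C, rfl⟩, _, ⟨v, rfl⟩, hCv⟩ := Submodule.mem_sup.1 (h hp)
    have hp' : fderiv ℂ 𝒜.orbitMap (0, 0) (C, v) = p := (𝒜.fderiv_orbitMap_apply C v).trans hCv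
    exact ⟨(C, v), Subtype.ext ((congrArg (fun q => (π q).1) hp').trans (hπ hp))⟩
  obtain ⟨g, hg, hg0, hπg⟩ := exists_analyticAt_rightInverse
    ((π.analyticAt _).comp 𝒜.analyticAt_orbitMap)
    (π.hasFDerivAt.comp _ 𝒜.analyticAt_orbitMap.differentiableAt.hasFDerivAt) hsurj
  simp only [Function.comp_apply, 𝒜.orbitMap_zero] at hg hg0 hπg
  have hgπ : AnalyticAt ℂ (fun q => g (π q)) (A, B) := hg.comp (π.analyticAt _)
  have hφ0 : (g (π (A, B))).2 = 0 := congrArg Prod.snd hg0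
  have hφ : Tendsto (fun q => (g (π q)).2) (nhds (A, B)) (nhds 0) :=
    hφ0 ▸ hgπ.continuousAt.snd
  refine ⟨fun q => g (π q), hgπ, hg0, ?_⟩
  filter_upwards [hφ.eventually 𝒜.symm, π.continuous.continuousAt.eventually hπg] with q h𝒜 hπq hq
  have hsymm : 𝒜.orbitMap (g (π q)) ∈ SymPair ι := congrPair_mem_symPair h𝒜 _
  exact (hπ hsymm).symm.trans ((congrArg Subtype.val hπq).trans (hπ hq))

theorem isVersal_of_symPair_le
    (h : SymPair ι ≤ TSpace A B ⊔ LinearMap.range (fderiv ℂ 𝒜.map 0).toLinearMap) :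
    IsVersal 𝒜 := by
  intro Q _ _ _ ℬ
  obtain ⟨ψ, hψ, hψ0, h𝒜ψ⟩ := exists_analyticAt_orbitMap_eq h
  rw [← ℬ.init] at hψ hψ0 h𝒜ψ
  have hψℬ : AnalyticAt ℂ (fun q => ψ (ℬ.map q)) 0 := hψ.comp ℬ.analyticAt
  refine ⟨fun q => (ψ (ℬ.map q)).2, analyticAt_snd.comp hψℬ, congrArg Prod.snd hψ0,
    fun q => 1 + (ψ (ℬ.map q)).1,
    analyticAt_matrix_iff.1 (analyticAt_const.add (analyticAt_fst.comp hψℬ)), by simp [hψ0], ?_⟩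
  filter_upwards [ℬ.symm, ℬ.analyticAt.continuousAt.eventually h𝒜ψ] with q hsymm hq
  exact (hq hsymm).symm

theorem isVersal_iff : IsVersal 𝒜 ↔
    SymPair ι ≤ TSpace A B ⊔ LinearMap.range (fderiv ℂ 𝒜.map 0).toLinearMap :=
  ⟨IsVersal.symPair_le, isVersal_of_symPair_le⟩

theorem isVersal_patternDeformation_iff {hA : A.IsSymm} {hB : B.IsSymm}
    {D : Submodule ℂ (Matrix ι ι ℂ × Matrix ι ι ℂ)} {hD : D ≤ SymPair ι} :
    IsVersal (patternDeformation A B hA hB D hD) ↔ SymPair ι ≤ TSpace A B ⊔ D := by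
  have hderiv : HasFDerivAt (patternDeformation A B hA hB D hD).map D.subtypeL 0 :=
    D.subtypeL.hasFDerivAt.const_add (A, B)
  have hrange : LinearMap.range
      (fderiv ℂ (patternDeformation A B hA hB D hD).map 0).toLinearMap = D :=
    (congrArg (fun L : D →L[ℂ] _ => LinearMap.range L.toLinearMap) hderiv.fderiv).trans
      D.range_subtype
  exact isVersal_iff.trans (iff_of_eq (congrArg (SymPair ι ≤ TSpace A B ⊔ ·) hrange))

theorem IsVersal.finrank_symPair_le [FiniteDimensional ℂ P] (h : IsVersal 𝒜) :
    Module.finrank ℂ (SymPair ι) ≤ Module.finrank ℂ (TSpace A B) + Module.finrank ℂ P :=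
  calc Module.finrank ℂ (SymPair ι)
    _ ≤ Module.finrank ℂ ↥(TSpace A B ⊔ LinearMap.range (fderiv ℂ 𝒜.map 0).toLinearMap) :=
      Submodule.finrank_mono h.symPair_le
    _ ≤ Module.finrank ℂ (TSpace A B) +
        Module.finrank ℂ (LinearMap.range (fderiv ℂ 𝒜.map 0).toLinearMap) :=
      Submodule.finrank_add_le_finrank_add_finrank _ _
    _ ≤ Module.finrank ℂ (TSpace A B) + Module.finrank ℂ P := by
      gcongr
      exact LinearMap.finrank_range_le _

theorem exists_isVersal_finrank_add_eq (hA : A.IsSymm) (hB : B.IsSymm) :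
    ∃ (D : Submodule ℂ (Matrix ι ι ℂ × Matrix ι ι ℂ)) (hD : D ≤ SymPair ι),
      IsVersal (patternDeformation A B hA hB D hD) ∧
      Module.finrank ℂ (TSpace A B) + Module.finrank ℂ D = Module.finrank ℂ (SymPair ι) := by
  obtain ⟨D, hdisj, hsup⟩ :=
    IsModularLattice.exists_disjoint_and_sup_eq (TSpace_le_symPair hA hB)
  have hdim := Submodule.finrank_sup_add_finrank_inf_eq (TSpace A B) D
  rw [hsup, hdisj.eq_bot, finrank_bot, add_zero] at hdim
  exact ⟨D, hsup ▸ le_sup_right, isVersal_patternDeformation_iff.2 hsup.ge, hdim.symm⟩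

theorem isMiniversal_iff [FiniteDimensional ℂ P] : IsMiniversal 𝒜 ↔ IsVersal 𝒜 ∧
    Module.finrank ℂ (TSpace A B) + Module.finrank ℂ P = Module.finrank ℂ (SymPair ι) := by
  refine and_congr_right fun h𝒜 => ⟨fun hmin => ?_, fun hdim Q _ _ _ ℬ hℬ => ?_⟩
  · obtain ⟨D, hD, hversal, hdim⟩ :=
      exists_isVersal_finrank_add_eq 𝒜.mem_symPair.1 𝒜.mem_symPair.2
    have := hmin D _ _ inferInstance _ hversal
    have := h𝒜.finrank_symPair_le
    lia
  · have := hℬ.finrank_symPair_le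
    lia

theorem isMiniversal_patternDeformation_iff {hA : A.IsSymm} {hB : B.IsSymm}
    {D : Submodule ℂ (Matrix ι ι ℂ × Matrix ι ι ℂ)} {hD : D ≤ SymPair ι} :
    IsMiniversal (patternDeformation A B hA hB D hD) ↔
      IsTransversal (SymPair ι) (TSpace A B) D := by
  rw [isMiniversal_iff, isVersal_patternDeformation_iff, isTransversal_iff]
  refine and_congr_right fun h => ?_
  have hdim := Submodule.finrank_sup_add_finrank_inf_eq (TSpace A B) D
  rw [(sup_le (TSpace_le_symPair hA hB) hD).antisymm h] at hdim
  rw [← Submodule.finrank_eq_zero (R := ℂ)]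
  lia

end Versality

section Blocks

variable {o : Type} {m : o → Type}

/-- The blocks of a pair of matrices indexed by a disjoint union: `pairBlocks p i j` is the pair of
blocks in position `(i, j)`. -/
def pairBlocks :
    (Matrix (Σ i, m i) (Σ i, m i) ℂ × Matrix (Σ i, m i) (Σ i, m i) ℂ) ≃ₗ[ℂ]
      ∀ i j, Matrix (m i) (m j) ℂ × Matrix (m i) (m j) ℂ where
  toFun p i j := (p.1.submatrix (Sigma.mk i) (Sigma.mk j), p.2.submatrix (Sigma.mk i) (Sigma.mk j))
  map_add' _ _ := rfl
  map_smul' _ _ := rfl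
  invFun b := (of fun x y => (b x.1 y.1).1 x.2 y.2, of fun x y => (b x.1 y.1).2 x.2 y.2)
  left_inv _ := rfl
  right_inv _ := rfl

theorem pairBlocks_transposePair
    (p : Matrix (Σ i, m i) (Σ i, m i) ℂ × Matrix (Σ i, m i) (Σ i, m i) ℂ) (i j : o) :
    pairBlocks (transposePair p) i j = transposePair (pairBlocks p j i) :=
  rfl

/-- The pairs of matrices whose block in position `(i, j)` lies in `W i j`, for all `i` and `j`. -/
def blockwise (W : ∀ i j, Submodule ℂ (Matrix (m i) (m j) ℂ × Matrix (m i) (m j) ℂ)) :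
    Submodule ℂ (Matrix (Σ i, m i) (Σ i, m i) ℂ × Matrix (Σ i, m i) (Σ i, m i) ℂ) :=
  (Submodule.pi Set.univ fun i => Submodule.pi Set.univ (W i)).comap pairBlocks.toLinearMap

/-- A family of spaces of pairs of blocks is stable under transposition if transposing an element of
the space in position `(i, j)` gives an element of the space in position `(j, i)`. -/
def IsTransposeStable (W : ∀ i j, Submodule ℂ (Matrix (m i) (m j) ℂ × Matrix (m i) (m j) ℂ)) :
    Prop :=
  ∀ ⦃i j⦄, ∀ p ∈ W i j, transposePair p ∈ W j i

variable {p : Matrix (Σ i, m i) (Σ i, m i) ℂ × Matrix (Σ i, m i) (Σ i, m i) ℂ}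
  {W E : ∀ i j, Submodule ℂ (Matrix (m i) (m j) ℂ × Matrix (m i) (m j) ℂ)}

theorem mem_blockwise : p ∈ blockwise W ↔ ∀ i j, pairBlocks p i j ∈ W i j := by
  simp [blockwise]

theorem blockwise_sup : blockwise W ⊔ blockwise E = blockwise fun i j => W i j ⊔ E i j := by
  refine le_antisymm (sup_le ?_ ?_) fun p hp => ?_
  · exact fun p hp => mem_blockwise.2 fun i j => Submodule.mem_sup_left (mem_blockwise.1 hp i j)
  · exact fun p hp => mem_blockwise.2 fun i j => Submodule.mem_sup_right (mem_blockwise.1 hp i j)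
  · choose w hw e he hwe using fun i j => Submodule.mem_sup.1 (mem_blockwise.1 hp i j)
    have hp' : pairBlocks.symm w + pairBlocks.symm e = p := by
      rw [← map_add, LinearEquiv.symm_apply_eq]
      exact funext₂ hwe
    exact hp' ▸ Submodule.add_mem_sup (mem_blockwise.2 hw) (mem_blockwise.2 he)

theorem blockwise_inf : blockwise W ⊓ blockwise E = blockwise fun i j => W i j ⊓ E i j := by
  ext p
  simp [mem_blockwise, forall_and]

theorem IsTransposeStable.transposePair_mem_blockwise (hW : IsTransposeStable W)
    (hp : p ∈ blockwise W) :
    transposePair p ∈ blockwise W :=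
  mem_blockwise.2 fun i j => hW _ (mem_blockwise.1 hp j i)

theorem IsTransposeStable.sup (hW : IsTransposeStable W) (hE : IsTransposeStable E) :
    IsTransposeStable fun i j => W i j ⊔ E i j := fun i j p hp => by
  obtain ⟨w, hw, e, he, rfl⟩ := Submodule.mem_sup.1 hp
  exact map_add transposePair w e ▸ Submodule.add_mem_sup (hW w hw) (hE e he)

theorem IsTransposeStable.inf (hW : IsTransposeStable W) (hE : IsTransposeStable E) :
    IsTransposeStable fun i j => W i j ⊓ E i j :=
  fun _ _ p hp => ⟨hW p hp.1, hE p hp.2⟩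

section Single

variable [DecidableEq o] {i j : o}

/-- The pair of matrices whose only nonzero block is `v`, in position `(i, j)`. -/
def blockSingle (i j : o) (v : Matrix (m i) (m j) ℂ × Matrix (m i) (m j) ℂ) :
    Matrix (Σ i, m i) (Σ i, m i) ℂ × Matrix (Σ i, m i) (Σ i, m i) ℂ :=
  pairBlocks.symm (Pi.single i (Pi.single j v))

theorem pairBlocks_blockSingle_self (v : Matrix (m i) (m j) ℂ × Matrix (m i) (m j) ℂ) :
    pairBlocks (blockSingle i j v) i j = v := by
  simp [blockSingle]

theorem pairBlocks_blockSingle_of_ne {k l : o} (h : (k, l) ≠ (i, j))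
    (v : Matrix (m i) (m j) ℂ × Matrix (m i) (m j) ℂ) :
    pairBlocks (blockSingle i j v) k l = 0 := by
  rw [blockSingle, LinearEquiv.apply_symm_apply]
  by_cases hk : k = i
  · subst hk
    rw [Pi.single_eq_same, Pi.single_eq_of_ne (by simpa using h)]
  · rw [Pi.single_eq_of_ne hk, Pi.zero_apply]

theorem transposePair_blockSingle (v : Matrix (m i) (m j) ℂ × Matrix (m i) (m j) ℂ) :
    transposePair (blockSingle i j v) = blockSingle j i (transposePair v) := by
  refine pairBlocks.injective (funext₂ fun k l => ?_)
  rw [pairBlocks_transposePair]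
  by_cases h : (l, k) = (i, j)
  · obtain ⟨rfl, rfl⟩ := Prod.mk.inj h
    simp_rw [pairBlocks_blockSingle_self]
  · rw [pairBlocks_blockSingle_of_ne h, map_zero, pairBlocks_blockSingle_of_ne]
    simpa [and_comm] using h

theorem blockSingle_mem_blockwise {v : Matrix (m i) (m j) ℂ × Matrix (m i) (m j) ℂ}
    (hv : v ∈ W i j) : blockSingle i j v ∈ blockwise W := by
  refine mem_blockwise.2 fun k l => ?_
  by_cases h : (k, l) = (i, j)
  · obtain ⟨rfl, rfl⟩ := Prod.mk.inj h
    rwa [pairBlocks_blockSingle_self]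
  · exact pairBlocks_blockSingle_of_ne h v ▸ zero_mem _

end Single

variable [Fintype o] [∀ i, Fintype (m i)]

theorem pairBlocks_self_mem_symPair (hp : p ∈ SymPair (Σ i, m i)) (i : o) :
    pairBlocks p i i ∈ SymPair (m i) :=
  ⟨hp.1.submatrix _, hp.2.submatrix _⟩

variable [LinearOrder o]

theorem mem_blockwise_iff_of_mem_symPair (hW : IsTransposeStable W)
    (hp : p ∈ SymPair (Σ i, m i)) : p ∈ blockwise W ↔
      (∀ i, pairBlocks p i i ∈ W i i) ∧ ∀ i j, i < j → pairBlocks p i j ∈ W i j := by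
  refine ⟨fun h => ⟨fun i => mem_blockwise.1 h i i, fun i j _ => mem_blockwise.1 h i j⟩,
    fun ⟨hdiag, hupper⟩ => mem_blockwise.2 fun i j => ?_⟩
  rcases lt_trichotomy i j with hij | rfl | hji
  · exact hupper i j hij
  · exact hdiag i
  · rw [← mem_symPair_iff.1 hp, pairBlocks_transposePair]
    exact hW _ (hupper j i hji)

theorem blockSingle_mem_symPair {i : o} {v : Matrix (m i) (m i) ℂ × Matrix (m i) (m i) ℂ}
    (hv : v ∈ SymPair (m i)) : blockSingle i i v ∈ SymPair (Σ i, m i) := by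
  rw [mem_symPair_iff, transposePair_blockSingle, mem_symPair_iff.1 hv]

theorem exists_mem_symPair_pairBlocks_eq {i j : o} (hij : i < j)
    (v : Matrix (m i) (m j) ℂ × Matrix (m i) (m j) ℂ) :
    ∃ p ∈ SymPair (Σ i, m i), pairBlocks p i j = v ∧
      ∀ W, IsTransposeStable W → v ∈ W i j → p ∈ blockwise W := by
  refine ⟨blockSingle i j v + transposePair (blockSingle i j v), ?_, ?_, fun W hW hv => ?_⟩
  · rw [mem_symPair_iff, map_add, transposePair_transposePair, add_comm]
  · rw [transposePair_blockSingle, map_add, Pi.add_apply, Pi.add_apply,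
      pairBlocks_blockSingle_self, pairBlocks_blockSingle_of_ne (by simp [hij.ne]), add_zero]
  · have := blockSingle_mem_blockwise hv
    exact add_mem this (hW.transposePair_mem_blockwise this)

theorem symPair_le_blockwise_iff (hW : IsTransposeStable W) : SymPair (Σ i, m i) ≤ blockwise W ↔
    (∀ i, SymPair (m i) ≤ W i i) ∧ ∀ i j, i < j → ⊤ ≤ W i j := by
  refine ⟨fun h => ⟨fun i v hv => ?_, fun i j hij v _ => ?_⟩, fun ⟨hdiag, hupper⟩ p hp => ?_⟩
  · rw [← pairBlocks_blockSingle_self v]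
    exact mem_blockwise.1 (h (blockSingle_mem_symPair hv)) i i
  · obtain ⟨p, hp, rfl, -⟩ := exists_mem_symPair_pairBlocks_eq hij v
    exact mem_blockwise.1 (h hp) i j
  · exact (mem_blockwise_iff_of_mem_symPair hW hp).2
      ⟨fun i => hdiag i (pairBlocks_self_mem_symPair hp i), fun i j hij => hupper i j hij trivial⟩

theorem symPair_inf_blockwise_eq_bot_iff (hW : IsTransposeStable W) :
    SymPair (Σ i, m i) ⊓ blockwise W = ⊥ ↔
      (∀ i, SymPair (m i) ⊓ W i i = ⊥) ∧ ∀ i j, i < j → W i j = ⊥ := by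
  simp only [Submodule.eq_bot_iff]
  refine ⟨fun h => ⟨fun i v ⟨hv, hvW⟩ => ?_, fun i j hij v hv => ?_⟩,
    fun ⟨hdiag, hupper⟩ p ⟨hp, hpW⟩ => ?_⟩
  · rw [← pairBlocks_blockSingle_self v,
      h _ ⟨blockSingle_mem_symPair hv, blockSingle_mem_blockwise hvW⟩]
    rfl
  · obtain ⟨p, hp, rfl, hpW⟩ := exists_mem_symPair_pairBlocks_eq hij v
    rw [h p ⟨hp, hpW W hW hv⟩]
    rfl
  · have hzero : p ∈ blockwise (m := m) fun _ _ => ⊥ :=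
      (mem_blockwise_iff_of_mem_symPair (by simp [IsTransposeStable]) hp).2
        ⟨fun i => hdiag i _ ⟨pairBlocks_self_mem_symPair hp i, mem_blockwise.1 hpW i i⟩,
          fun i j hij => hupper i j hij _ (mem_blockwise.1 hpW i j)⟩
    exact pairBlocks.map_eq_zero_iff.1 (funext₂ (mem_blockwise.1 hzero))

theorem isTransversal_symPair_blockwise_iff (hW : IsTransposeStable W) (hE : IsTransposeStable E) :
    IsTransversal (SymPair (Σ i, m i)) (SymPair _ ⊓ blockwise W) (SymPair _ ⊓ blockwise E) ↔
      (∀ i, IsTransversal (SymPair (m i)) (SymPair _ ⊓ W i i) (SymPair _ ⊓ E i i)) ∧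
        ∀ i j, i < j → IsTransversal ⊤ (W i j) (E i j) := by
  simp only [isTransversal_iff, ← inf_inf_distrib_left]
  rw [symPair_le_sup_iff (fun _ => hW.transposePair_mem_blockwise)
    fun _ => hE.transposePair_mem_blockwise, blockwise_sup, blockwise_inf,
    symPair_le_blockwise_iff (hW.sup hE), symPair_inf_blockwise_eq_bot_iff (hW.inf hE)]
  simp only [fun i => symPair_le_sup_iff (hW (i := i) (j := i)) (hE (i := i) (j := i)), forall_and]
  tauto

end Blocks

section TangentSpace

variable {ι κ : Type} [Fintype ι] [Fintype κ] {A B : Matrix ι ι ℂ} {A' B' : Matrix κ κ ℂ}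

theorem transposePair_offMap (hA : A.IsSymm) (hB : B.IsSymm) (hA' : A'.IsSymm) (hB' : B'.IsSymm)
    (S : Matrix ι κ ℂ) (R : Matrix κ ι ℂ) :
    transposePair (offMap A B A' B' (S, R)) = offMap A' B' A B (R, S) := by
  simp [transposePair_apply, offMap, hA.eq, hB.eq, hA'.eq, hB'.eq, add_comm]

theorem transposePair_mem_WSpace (hA : A.IsSymm) (hB : B.IsSymm) (hA' : A'.IsSymm)
    (hB' : B'.IsSymm) {p : Matrix ι κ ℂ × Matrix ι κ ℂ} (hp : p ∈ WSpace A B A' B') :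
    transposePair p ∈ WSpace A' B' A B := by
  obtain ⟨⟨S, R⟩, rfl⟩ := hp
  exact ⟨(R, S), (transposePair_offMap hA hB hA' hB' S R).symm⟩

theorem TSpace_eq_symPair_inf_WSpace (hA : A.IsSymm) (hB : B.IsSymm) :
    TSpace A B = SymPair ι ⊓ WSpace A B A B := by
  refine le_antisymm (le_inf (TSpace_le_symPair hA hB) ?_) ?_
  · rintro _ ⟨C, rfl⟩
    exact ⟨(C, C), rfl⟩
  · rintro _ ⟨hp, ⟨⟨S, R⟩, rfl⟩⟩
    refine ⟨(1 / 2 : ℂ) • (S + R), ?_⟩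
    calc congMap A B ((1 / 2 : ℂ) • (S + R))
      _ = (1 / 2 : ℂ) • offMap A B A B ((S, R) + (R, S)) := by
        rw [map_smul, Prod.mk_add_mk, add_comm R S]
        rfl
      _ = symmetrize ι (offMap A B A B (S, R)) := by
        rw [map_add, symmetrize_apply, transposePair_offMap hA hB hA hB]
      _ = offMap A B A B (S, R) := symmetrize_eq_self hp

end TangentSpace

section BlockDiagonal

variable {R o : Type*} [DecidableEq o] [NonUnitalNonAssocSemiring R] {m n : o → Type*}
  (A : ∀ i, Matrix (m i) (n i) R)

theorem blockDiagonal'_submatrix_mk (i : o) :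
    (blockDiagonal' A).submatrix (Sigma.mk i) (Sigma.mk i) = A i :=
  Matrix.ext fun x y => blockDiagonal'_apply_eq A i x y

variable [Fintype o]

theorem submatrix_mul_blockDiagonal' [∀ i, Fintype (m i)] {k l : Type*}
    (X : Matrix k (Σ i, m i) R) (f : l → k) (j : o) :
    (X * blockDiagonal' A).submatrix f (Sigma.mk j) = X.submatrix f (Sigma.mk j) * A j := by
  ext x y
  simp only [submatrix_apply, mul_apply, Fintype.sum_sigma]
  rw [Finset.sum_eq_single j (fun i _ hi => by simp [blockDiagonal'_apply_ne A _ _ hi]) (by simp)]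
  simp only [blockDiagonal'_apply_eq]

theorem submatrix_blockDiagonal'_mul [∀ i, Fintype (n i)] {k l : Type*}
    (X : Matrix (Σ i, n i) k R) (f : l → k) (i : o) :
    (blockDiagonal' A * X).submatrix (Sigma.mk i) f = A i * X.submatrix (Sigma.mk i) f := by
  ext x y
  simp only [submatrix_apply, mul_apply, Fintype.sum_sigma]
  rw [Finset.sum_eq_single i (fun j _ hj => by simp [blockDiagonal'_apply_ne A _ _ hj.symm])
    (by simp)]
  simp only [blockDiagonal'_apply_eq]

end BlockDiagonal

section BlockTangentSpace

variable {o : Type} [DecidableEq o] [Fintype o] {m : o → Type} [∀ i, Fintype (m i)]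
  {A B : ∀ i, Matrix (m i) (m i) ℂ}

theorem pairBlocks_offMap
    (p : Matrix (Σ i, m i) (Σ i, m i) ℂ × Matrix (Σ i, m i) (Σ i, m i) ℂ) (i j : o) :
    pairBlocks (offMap (blockDiagonal' A) (blockDiagonal' B) (blockDiagonal' A) (blockDiagonal' B)
      p) i j = offMap (A i) (B i) (A j) (B j) ((pairBlocks p i j).1, (pairBlocks p j i).2) := by
  have hblock (M : ∀ i, Matrix (m i) (m i) ℂ) (S R : Matrix (Σ i, m i) (Σ i, m i) ℂ) :
      (Rᵀ * blockDiagonal' M + blockDiagonal' M * S).submatrix (Sigma.mk i) (Sigma.mk j) =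
        (R.submatrix (Sigma.mk j) (Sigma.mk i))ᵀ * M j +
          M i * S.submatrix (Sigma.mk i) (Sigma.mk j) := by
    rw [submatrix_add, Pi.add_apply, Pi.add_apply, submatrix_mul_blockDiagonal',
      submatrix_blockDiagonal'_mul, transpose_submatrix]
  exact Prod.ext (hblock A p.1 p.2) (hblock B p.1 p.2)

theorem WSpace_blockDiagonal' :
    WSpace (blockDiagonal' A) (blockDiagonal' B) (blockDiagonal' A) (blockDiagonal' B) =
      blockwise fun i j => WSpace (A i) (B i) (A j) (B j) := by
  ext p
  rw [mem_blockwise]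
  constructor
  · rintro ⟨c, rfl⟩ i j
    exact ⟨_, (pairBlocks_offMap c i j).symm⟩
  · intro h
    choose c hc using h
    refine ⟨pairBlocks.symm fun i j => ((c i j).1, (c j i).2), pairBlocks.injective ?_⟩
    funext i j
    exact (pairBlocks_offMap _ i j).trans (hc i j)

end BlockTangentSpace

section Pattern

variable {o : Type} {m : o → Type}

theorem Pattern_eq_symPair_inf_entryPattern {ι : Type} [Fintype ι] (I₁ I₂ : Set (ι × ι)) :
    Pattern I₁ I₂ = SymPair ι ⊓ entryPattern I₁ I₂ :=
  Submodule.ext fun _ => and_assoc.symm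

/-- The block pattern space in position `(i, j)` of the pattern space given by `I₁` and `I₂`. -/
def blockPattern (I₁ I₂ : Set ((Σ i, m i) × Σ i, m i)) (i j : o) :
    Submodule ℂ (Matrix (m i) (m j) ℂ × Matrix (m i) (m j) ℂ) :=
  entryPattern {x | (⟨i, x.1⟩, ⟨j, x.2⟩) ∈ I₁} {x | (⟨i, x.1⟩, ⟨j, x.2⟩) ∈ I₂}

theorem entryPattern_eq_blockwise (I₁ I₂ : Set ((Σ i, m i) × Σ i, m i)) :
    entryPattern I₁ I₂ = blockwise (blockPattern I₁ I₂) := by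
  ext p
  rw [mem_blockwise]
  exact ⟨fun h i j => ⟨fun x y => h.1 ⟨i, x⟩ ⟨j, y⟩, fun x y => h.2 ⟨i, x⟩ ⟨j, y⟩⟩,
    fun h => ⟨fun x y => (h x.1 y.1).1 x.2 y.2, fun x y => (h x.1 y.1).2 x.2 y.2⟩⟩

theorem Pattern_eq_symPair_inf_blockwise [Fintype o] [∀ i, Fintype (m i)]
    (I₁ I₂ : Set ((Σ i, m i) × Σ i, m i)) :
    Pattern I₁ I₂ = SymPair _ ⊓ blockwise (blockPattern I₁ I₂) := by
  rw [Pattern_eq_symPair_inf_entryPattern, entryPattern_eq_blockwise]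

theorem isTransposeStable_blockPattern {I₁ I₂ : Set ((Σ i, m i) × Σ i, m i)}
    (hI₁ : ∀ x y, (x, y) ∈ I₁ ↔ (y, x) ∈ I₁) (hI₂ : ∀ x y, (x, y) ∈ I₂ ↔ (y, x) ∈ I₂) :
    IsTransposeStable (blockPattern I₁ I₂) :=
  fun _ _ _ hp => ⟨fun x y hxy => hp.1 y x (mt (hI₁ _ _).1 hxy),
    fun x y hxy => hp.2 y x (mt (hI₂ _ _).1 hxy)⟩

end Pattern

theorem miniversal_iff_blocks_general {o : Type} [LinearOrder o] [Fintype o] {m : o → Type}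
    [∀ i, Fintype (m i)] [∀ i, DecidableEq (m i)] {A B : ∀ i, Matrix (m i) (m i) ℂ}
    (hA : (blockDiagonal' A).IsSymm) (hB : (blockDiagonal' B).IsSymm)
    {E : ∀ i j, Submodule ℂ (Matrix (m i) (m j) ℂ × Matrix (m i) (m j) ℂ)}
    (hE : IsTransposeStable E)
    {D : Submodule ℂ (Matrix (Σ i, m i) (Σ i, m i) ℂ × Matrix (Σ i, m i) (Σ i, m i) ℂ)}
    (hD : D = SymPair _ ⊓ blockwise E) :
    IsMiniversal (patternDeformation (blockDiagonal' A) (blockDiagonal' B) hA hB D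
        (hD.trans_le inf_le_left)) ↔
      (∀ i, IsTransversal (SymPair (m i)) (TSpace (A i) (B i)) (SymPair _ ⊓ E i i)) ∧
        ∀ i j, i < j → IsTransversal ⊤ (WSpace (A i) (B i) (A j) (B j)) (E i j) := by
  have hAi (i : o) : (A i).IsSymm := blockDiagonal'_submatrix_mk A i ▸ hA.submatrix _
  have hBi (i : o) : (B i).IsSymm := blockDiagonal'_submatrix_mk B i ▸ hB.submatrix _
  have hW : IsTransposeStable fun i j => WSpace (A i) (B i) (A j) (B j) :=
    fun i j _ => transposePair_mem_WSpace (hAi i) (hBi i) (hAi j) (hBi j)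
  rw [isMiniversal_patternDeformation_iff, hD, TSpace_eq_symPair_inf_WSpace hA hB,
    WSpace_blockDiagonal', isTransversal_symPair_blockwise_iff hW hE]
  simp only [fun i => TSpace_eq_symPair_inf_WSpace (hAi i) (hBi i)]

/-- **Lemma (miniversality blockwise).** For a block-diagonal pair
`(A,B) = (A₁,B₁) ⊕ ⋯ ⊕ (A_t,B_t)` of symmetric complex matrices and a pattern space
`𝒟(ℂ)` given by symmetric sets of positions, the deformation `(X,Y) ↦ (A+X, B+Y)`
parametrized by `𝒟(ℂ)` is miniversal if and only if (i) for each `i`, every coset of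
`T(Aᵢ,Bᵢ)` in `Sym×Sym` contains exactly one element of the diagonal block pattern
space `𝒟ᵢᵢ(ℂ)`, and (ii) for all `i < j`, every coset of
`W = {(Rᵀ A_j + A_i S, Rᵀ B_j + B_i S)}` contains exactly one element of the
off-diagonal block pattern space `𝒟ᵢⱼ(ℂ)`. -/
theorem miniversal_iff_blocks {t : ℕ} (ns : Fin t → ℕ)
    (A B : ∀ i, Matrix (Fin (ns i)) (Fin (ns i)) ℂ)
    (hA : ∀ i, (A i).IsSymm) (hB : ∀ i, (B i).IsSymm)
    (I1 I2 : Set ((Σ i, Fin (ns i)) × (Σ i, Fin (ns i))))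
    (hI1 : ∀ x y : (Σ i, Fin (ns i)), (x, y) ∈ I1 ↔ (y, x) ∈ I1)
    (hI2 : ∀ x y : (Σ i, Fin (ns i)), (x, y) ∈ I2 ↔ (y, x) ∈ I2) :
    IsMiniversal (patternDeformation (Matrix.blockDiagonal' A) (Matrix.blockDiagonal' B)
        (blockDiagonal'_isSymm A hA) (blockDiagonal'_isSymm B hB)
        (Pattern I1 I2) (Pattern_le I1 I2)) ↔
      ((∀ i, ∀ v ∈ SymPair (Fin (ns i)), ∃! d,
          d ∈ Pattern {pq : Fin (ns i) × Fin (ns i) | (⟨i, pq.1⟩, ⟨i, pq.2⟩) ∈ I1}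
                {pq : Fin (ns i) × Fin (ns i) | (⟨i, pq.1⟩, ⟨i, pq.2⟩) ∈ I2} ∧
            v - d ∈ TSpace (A i) (B i)) ∧
       (∀ i j : Fin t, i < j → ∀ v : Matrix (Fin (ns i)) (Fin (ns j)) ℂ ×
            Matrix (Fin (ns i)) (Fin (ns j)) ℂ, ∃! d,
          d ∈ entryPattern {pq : Fin (ns i) × Fin (ns j) | (⟨i, pq.1⟩, ⟨j, pq.2⟩) ∈ I1}
                {pq : Fin (ns i) × Fin (ns j) | (⟨i, pq.1⟩, ⟨j, pq.2⟩) ∈ I2} ∧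
            v - d ∈ WSpace (A i) (B i) (A j) (B j))) := by
  simpa only [blockPattern, ← Pattern_eq_symPair_inf_entryPattern, IsTransversal,
    Submodule.mem_top, true_imp_iff] using
    miniversal_iff_blocks_general (blockDiagonal'_isSymm A hA) (blockDiagonal'_isSymm B hB)
      (isTransposeStable_blockPattern hI1 hI2) (Pattern_eq_symPair_inf_blockwise I1 I2)

end
end
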